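/- Let n ≥ 2 and let Ω = ℝⁿ \ Ḡ, where G is a convex domain in ℝⁿ. If u is a bounded harmonic function in Ω, then for every point x ∈ Ω one has |∇u(x)| ≤ (C_n / d_x) · sup_Ω |u|, where C_n = 4(n−1)^{(n−1)/2} ω_{n−1} / (n^{n/2} ω_n). -/

import Mathlib

open MeasureTheory Real Filter Metric
open scoped Real RealInnerProductSpace

noncomputable section

/-- `Eu n` is the Euclidean space `ℝⁿ`. -/
abbrev Eu (n : ℕ) := EuclideanSpace ℝ (Fin n)

/-- `ω_n`: the surface area of the unit sphere `S^{n-1}` in `ℝⁿ`,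
given by the classical formula `2 π^{n/2} / Γ(n/2)`. -/
def sphereArea (n : ℕ) : ℝ := 2 * π ^ ((n : ℝ) / 2) / Real.Gamma ((n : ℝ) / 2)

/-- A function is harmonic on a set: it is twice continuously differentiable
there and its Laplacian (the sum of the pure second partial derivatives in the
coordinate directions) vanishes at every point of the set. -/
def IsHarmonicOn {n : ℕ} (u : Eu n → ℝ) (Ω : Set (Eu n)) : Prop :=
  ContDiffOn ℝ 2 u Ω ∧ ∀ x ∈ Ω,
    ∑ i, fderiv ℝ (fun y => fderiv ℝ u y (EuclideanSpace.single i 1)) x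
      (EuclideanSpace.single i 1) = 0

/-- The constant `C_n = 4 (n-1)^{(n-1)/2} ω_{n-1} / (n^{n/2} ω_n)`. -/
def Cconst (n : ℕ) : ℝ :=
  4 * ((n : ℝ) - 1) ^ (((n : ℝ) - 1) / 2) * sphereArea (n - 1) /
    ((n : ℝ) ^ ((n : ℝ) / 2) * sphereArea n)

/-!
Let `p` be the point of `Ḡ` nearest to `x`. By convexity `Ω` contains the half-space `H` with inner
unit normal `e = (x - p) / |x - p|` and `p` on its boundary, and `d_x ≤ |x - p| = dist(x, ∂H)`;
hence it is enough to treat a half-space.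

There a bounded harmonic function is the Poisson integral of its boundary values (uniqueness is a
Phragmén–Lindelöf argument), so its derivative in a unit direction `w` is controlled by the `L¹`
norm of the `w`-derivative of the Poisson kernel, whose numerator is a quadratic form `Q_{e,w}`.
Integrating against a Gaussian along rays turns that norm into a multiple of the integral of
`|Q_{e,w}|` against the Gaussian on `ℝⁿ`, where rotations become available. As `Q_{e,w}` is bilinear
and symmetric in `(e, w)`, polarization and the parallelogram law show that `w = e` is the worst
direction. For `w = e` the integrand is radial: it is the absolute derivative of the unimodal
function `r^{n-1} / (1 + r²)^{n/2}`, whose maximum, at `r² = n - 1`, produces `C_n`.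
-/

open InnerProductSpace Module Topology

section Hyperplane

variable {E : Type*} [NormedAddCommGroup E] [InnerProductSpace ℝ E]

/-- The linear hyperplane orthogonal to `e`, for a unit vector `e` the boundary of the half-space
`{X | 0 < ⟪X, e⟫}`. As a submodule it carries the Lebesgue measure of its inner product. -/
abbrev hyperplane (e : E) : Submodule ℝ E := (Submodule.span ℝ {e})ᗮ

variable {e : E}

theorem inner_hyperplane (y : hyperplane e) : ⟪(y : E), e⟫ = 0 :=
  Submodule.mem_orthogonal_singleton_iff_inner_left.mp y.2

theorem norm_hyperplane_add_smul_sq (he : ‖e‖ = 1) (y : hyperplane e) (s : ℝ) :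
    ‖(y : E) + s • e‖ ^ 2 = ‖y‖ ^ 2 + s ^ 2 := by
  rw [norm_add_sq_real, inner_smul_right, inner_hyperplane, norm_smul, he, Real.norm_eq_abs,
    mul_one, sq_abs, mul_zero, mul_zero, add_zero, Submodule.coe_norm]

theorem norm_hyperplane_add_sq (he : ‖e‖ = 1) (y : hyperplane e) :
    ‖(y : E) + e‖ ^ 2 = ‖y‖ ^ 2 + 1 := by
  simpa using norm_hyperplane_add_smul_sq he y 1

theorem norm_hyperplane_add_pos (he : ‖e‖ = 1) (y : hyperplane e) : 0 < ‖(y : E) + e‖ := by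
  have := norm_hyperplane_add_sq he y
  exact (sq_pos_iff.mp (by rw [this]; positivity)).lt_of_le' (norm_nonneg _)

theorem hyperplane_proj_add_smul (he : ‖e‖ = 1) (X : E) :
    ((hyperplane e).orthogonalProjectionOnto X : E) + ⟪X, e⟫ • e = X := by
  rw [Submodule.coe_orthogonalProjectionOnto_apply, Submodule.starProjection_orthogonal_val,
    Submodule.starProjection_unit_singleton ℝ he, real_inner_comm, sub_add_cancel]

variable [FiniteDimensional ℝ E]

theorem finrank_hyperplane_add_one (he : ‖e‖ = 1) :
    finrank ℝ (hyperplane e) + 1 = finrank ℝ E := by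
  have hline : finrank ℝ (Submodule.span ℝ {e}) = 1 :=
    finrank_span_singleton (norm_ne_zero_iff.mp (by simp [he]))
  rw [← (Submodule.span ℝ {e}).finrank_add_finrank_orthogonal, hline, add_comm]

theorem finrank_pos_of_norm_eq_one (he : ‖e‖ = 1) : 0 < finrank ℝ E := by
  rw [← finrank_hyperplane_add_one he]
  exact Nat.succ_pos _

theorem measurePreserving_hyperplane_add_smul [MeasurableSpace E] [BorelSpace E] (he : ‖e‖ = 1) :
    MeasurePreserving fun p : ℝ × hyperplane e => (p.2 : E) + p.1 • e := by
  let line := LinearIsometryEquiv.toSpanUnitSingleton (𝕜 := ℝ) e he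
  have hprod := line.measurePreserving.prod (.id (volume : Measure (hyperplane e)))
  convert! ((Submodule.span ℝ {e}).orthogonalDecomposition.symm.measurePreserving.comp
    (WithLp.volume_preserving_toLp _ _)).comp hprod using 2 with p
  exact add_comm _ _

end Hyperplane

section GaussianSlice

theorem lintegral_eq_mul_lintegral_comp_smul {V : Type*} [NormedAddCommGroup V] [NormedSpace ℝ V]
    [FiniteDimensional ℝ V] [MeasurableSpace V] [BorelSpace V] (μ : Measure V)
    [μ.IsAddHaarMeasure] {f : V → ENNReal} (hf : Measurable f) {s : ℝ} (hs : s ≠ 0) :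
    ∫⁻ y, f y ∂μ = ENNReal.ofReal (|s| ^ finrank ℝ V) * ∫⁻ z, f (s • z) ∂μ := by
  have hscale : |s| ^ finrank ℝ V * |(s ^ finrank ℝ V)⁻¹| = 1 := by
    rw [← abs_pow, ← abs_mul, mul_inv_cancel₀ (pow_ne_zero _ hs), abs_one]
  rw [← lintegral_map hf (measurable_const_smul s), Measure.map_addHaar_smul _ hs,
    lintegral_smul_measure, smul_eq_mul, ← mul_assoc, ← ENNReal.ofReal_mul (by positivity), hscale,
    ENNReal.ofReal_one, one_mul]

theorem integral_abs_pow_mul_exp_neg_sq (j : ℕ) {a : ℝ} (ha : 0 < a) :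
    ∫ s : ℝ, |s| ^ j * exp (-(a * s) ^ 2) = Gamma (((j + 1 : ℕ) : ℝ) / 2) * (a ^ (j + 1))⁻¹ := by
  have hGamma := integral_rpow_mul_exp_neg_mul_rpow (p := 2) (q := j) (b := a ^ 2) two_pos
    (by linarith [j.cast_nonneg (α := ℝ)]) (by positivity)
  have hpow : (a ^ 2) ^ (-((j : ℝ) + 1) / 2) = (a ^ (j + 1))⁻¹ := by
    rw [neg_div, rpow_neg (by positivity), rpow_div_two_eq_sqrt _ (by positivity), sqrt_sq ha.le]
    exact_mod_cast rfl
  simp only [rpow_natCast, rpow_ofNat, hpow, neg_mul, ← mul_pow] at hGamma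
  have hfold := integral_comp_abs (f := fun s : ℝ => s ^ j * exp (-a ^ 2 * s ^ 2))
  simp only [sq_abs, hGamma, neg_mul, ← mul_pow] at hfold
  rw [hfold]
  push_cast
  ring

theorem lintegral_abs_pow_mul_exp_neg_sq (j : ℕ) {a : ℝ} (ha : 0 < a) :
    ∫⁻ s : ℝ, ENNReal.ofReal (|s| ^ j * exp (-(a * s) ^ 2)) =
      ENNReal.ofReal (Gamma (((j + 1 : ℕ) : ℝ) / 2) * (a ^ (j + 1))⁻¹) := by
  rw [← integral_abs_pow_mul_exp_neg_sq j ha]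
  refine (ofReal_integral_eq_lintegral_ofReal (.of_integral_ne_zero ?_)
    (.of_forall fun s => by positivity)).symm
  rw [integral_abs_pow_mul_exp_neg_sq j ha]
  have := Gamma_pos_of_pos (s := ((j + 1 : ℕ) : ℝ) / 2) (by positivity)
  positivity

variable {E : Type*} [NormedAddCommGroup E] [InnerProductSpace ℝ E] [FiniteDimensional ℝ E]
  [MeasurableSpace E] [BorelSpace E] {e : E}

theorem lintegral_slice_mul_gaussian_of_homogeneous {F : E → ENNReal}
    (hF : Measurable F) {k : ℕ} (hhom : ∀ (s : ℝ) Z, F (s • Z) = ENNReal.ofReal (|s| ^ k) * F Z)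
    {s : ℝ} (hs : s ≠ 0) :
    ∫⁻ y : hyperplane e, F (y + s • e) * ENNReal.ofReal (exp (-‖(y : E) + s • e‖ ^ 2)) =
      ∫⁻ y : hyperplane e, F (y + e) * ENNReal.ofReal
        (|s| ^ (finrank ℝ (hyperplane e) + k) * exp (-(‖(y : E) + e‖ * s) ^ 2)) := by
  rw [lintegral_eq_mul_lintegral_comp_smul _ (by fun_prop) hs,
    ← lintegral_const_mul _ (by fun_prop)]
  refine lintegral_congr fun y => ?_
  rw [Submodule.coe_smul, ← smul_add, hhom, norm_smul, Real.norm_eq_abs, mul_pow, sq_abs,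
    mul_pow, mul_comm (s ^ 2), pow_add, mul_assoc, ENNReal.ofReal_mul (by positivity),
    ENNReal.ofReal_mul (by positivity)]
  ring

/-- Integrating a homogeneous function against the Gaussian along the rays through the affine
hyperplane `hyperplane e + e` trades the hyperplane integral for a rotation-invariant one. -/
theorem lintegral_mul_gaussian_of_homogeneous (he : ‖e‖ = 1) {F : E → ENNReal}
    (hF : Measurable F) {k : ℕ} (hhom : ∀ (s : ℝ) Z, F (s • Z) = ENNReal.ofReal (|s| ^ k) * F Z) :
    ∫⁻ Z, F Z * ENNReal.ofReal (exp (-‖Z‖ ^ 2)) =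
      ENNReal.ofReal (Gamma (((finrank ℝ E + k : ℕ) : ℝ) / 2)) *
        ∫⁻ y : hyperplane e, F (y + e) * ENNReal.ofReal (‖(y : E) + e‖ ^ (finrank ℝ E + k))⁻¹ := by
  have hne : ∀ᵐ s : ℝ, s ≠ 0 := by simp [ae_iff]
  have hdim : finrank ℝ (hyperplane e) + k + 1 = finrank ℝ E + k := by
    rw [← finrank_hyperplane_add_one he]
    omega
  rw [← (measurePreserving_hyperplane_add_smul he).lintegral_comp (by fun_prop),
    Measure.volume_eq_prod, lintegral_prod _ (by fun_prop),
    lintegral_congr_ae (hne.mono fun s hs =>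
      lintegral_slice_mul_gaussian_of_homogeneous hF hhom hs),
    lintegral_lintegral_swap (Measurable.aemeasurable (by unfold Function.uncurry; fun_prop)),
    ← lintegral_const_mul _ (by fun_prop)]
  refine lintegral_congr fun y => ?_
  rw [lintegral_const_mul _ (by fun_prop),
    lintegral_abs_pow_mul_exp_neg_sq _ (norm_hyperplane_add_pos he y), hdim,
    ENNReal.ofReal_mul (Gamma_nonneg_of_nonneg (by positivity))]
  ring

end GaussianSlice

section SphereArea

theorem sphereArea_pos {m : ℕ} (hm : 0 < m) : 0 < sphereArea m := by
  have := Gamma_pos_of_pos (s := (m : ℝ) / 2) (by positivity)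
  unfold sphereArea
  positivity

theorem finrank_mul_volume_real_ball_eq_sphereArea {V : Type*} [NormedAddCommGroup V]
    [InnerProductSpace ℝ V] [FiniteDimensional ℝ V] [MeasurableSpace V] [BorelSpace V]
    [Nontrivial V] :
    finrank ℝ V * (volume : Measure V).real (ball 0 1) = sphereArea (finrank ℝ V) := by
  have hdim : (0 : ℝ) < finrank ℝ V := by exact_mod_cast finrank_pos
  have := Gamma_pos_of_pos (half_pos hdim)
  rw [Measure.real, InnerProductSpace.volume_ball, ENNReal.ofReal_one, one_pow, one_mul,
    Gamma_add_one (by positivity), ENNReal.toReal_ofReal (by positivity), sphereArea,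
    rpow_div_two_eq_sqrt _ pi_nonneg, rpow_natCast]
  field_simp

variable {E : Type*} [NormedAddCommGroup E] [InnerProductSpace ℝ E] [FiniteDimensional ℝ E]
  [MeasurableSpace E] [BorelSpace E] {e : E}

theorem integral_inv_norm_hyperplane_add_pow (he : ‖e‖ = 1) :
    ∫ y : hyperplane e, (‖(y : E) + e‖ ^ finrank ℝ E)⁻¹ = sphereArea (finrank ℝ E) / 2 := by
  have hn := finrank_pos_of_norm_eq_one he
  have hGamma : 0 < Gamma ((finrank ℝ E : ℝ) / 2) := Gamma_pos_of_pos (by positivity)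
  have hslice := lintegral_mul_gaussian_of_homogeneous he (F := fun _ => 1) measurable_const
    (k := 0) (by simp)
  have hgauss := GaussianFourier.integral_rexp_neg_mul_sq_norm (V := E) one_pos
  simp only [one_mul, add_zero] at hslice
  simp only [neg_mul, one_mul, div_one] at hgauss
  rw [integral_eq_lintegral_of_nonneg_ae (.of_forall fun _ => by positivity) (by fun_prop),
    hslice, ENNReal.toReal_mul, ENNReal.toReal_ofReal hGamma.le] at hgauss
  rw [integral_eq_lintegral_of_nonneg_ae (.of_forall fun _ => by positivity)
    (Measurable.aestronglyMeasurable (by fun_prop)), sphereArea, ← hgauss]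
  field_simp

theorem integrable_inv_norm_hyperplane_add_pow (he : ‖e‖ = 1) :
    Integrable fun y : hyperplane e => (‖(y : E) + e‖ ^ finrank ℝ E)⁻¹ := by
  refine .of_integral_ne_zero ?_
  rw [integral_inv_norm_hyperplane_add_pow he]
  exact (half_pos (sphereArea_pos (finrank_pos_of_norm_eq_one he))).ne'

end SphereArea

section PoissonForm

variable {E : Type*} [NormedAddCommGroup E] [InnerProductSpace ℝ E]

/-- The quadratic form in `Z` for which `poissonForm e w Z / ‖Z‖ ^ (n + 2)` is the derivative of
the Poisson kernel `⟪Z, e⟫ / ‖Z‖ ^ n` in the direction `w`, where `n` is the dimension. It is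
symmetric and bilinear in `(e, w)`. -/
def poissonForm (e w Z : E) : ℝ := ⟪w, e⟫ * ‖Z‖ ^ 2 - finrank ℝ E * (⟪Z, e⟫ * ⟪Z, w⟫)

@[fun_prop]
theorem continuous_poissonForm (e w : E) : Continuous (poissonForm e w) := by
  unfold poissonForm
  fun_prop

theorem poissonForm_smul_right (e w : E) (s : ℝ) (Z : E) :
    poissonForm e w (s • Z) = s ^ 2 * poissonForm e w Z := by
  simp only [poissonForm, norm_smul, real_inner_smul_left, mul_pow, Real.norm_eq_abs, sq_abs]
  ring

theorem poissonForm_smul_self (s : ℝ) (a Z : E) :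
    poissonForm (s • a) (s • a) Z = s ^ 2 * poissonForm a a Z := by
  simp only [poissonForm, real_inner_smul_left, real_inner_smul_right]
  ring

theorem poissonForm_map (R : E ≃ₗᵢ[ℝ] E) (e w Z : E) :
    poissonForm (R e) (R w) (R Z) = poissonForm e w Z := by
  simp only [poissonForm, LinearIsometryEquiv.inner_map_map, LinearIsometryEquiv.norm_map]

theorem poissonForm_polarization (e w Z : E) :
    poissonForm e w Z =
      1 / 4 * poissonForm (e + w) (e + w) Z - 1 / 4 * poissonForm (e - w) (e - w) Z := by
  simp only [poissonForm, inner_add_left, inner_add_right, inner_sub_left, inner_sub_right,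
    real_inner_comm e w]
  ring

theorem abs_poissonForm_le (e w Z : E) :
    |poissonForm e w Z| ≤ (finrank ℝ E + 1) * ‖e‖ * ‖w‖ * ‖Z‖ ^ 2 := by
  have hwe := abs_real_inner_le_norm w e
  have hZe := abs_real_inner_le_norm Z e
  have hZw := abs_real_inner_le_norm Z w
  calc |poissonForm e w Z|
      ≤ |⟪w, e⟫| * ‖Z‖ ^ 2 + finrank ℝ E * (|⟪Z, e⟫| * |⟪Z, w⟫|) := by
        refine (abs_sub _ _).trans_eq ?_
        rw [abs_mul, abs_mul, abs_mul, abs_of_nonneg (sq_nonneg ‖Z‖), Nat.abs_cast]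
    _ ≤ ‖w‖ * ‖e‖ * ‖Z‖ ^ 2 + finrank ℝ E * ((‖Z‖ * ‖e‖) * (‖Z‖ * ‖w‖)) := by gcongr
    _ = (finrank ℝ E + 1) * ‖e‖ * ‖w‖ * ‖Z‖ ^ 2 := by ring

variable [FiniteDimensional ℝ E]

theorem poissonForm_self_hyperplane_add {e : E} (he : ‖e‖ = 1) (y : hyperplane e) :
    poissonForm e e (y + e) = ‖y‖ ^ 2 - finrank ℝ (hyperplane e) := by
  rw [poissonForm, norm_hyperplane_add_sq he, inner_add_left, inner_hyperplane,
    real_inner_self_eq_norm_sq, he, ← finrank_hyperplane_add_one he]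
  push_cast
  ring

variable [MeasurableSpace E] [BorelSpace E]

/-- The integral of `|poissonForm e w|` against the Gaussian weight, a rotation-invariant
quantity. -/
def gaussianPoissonForm (e w : E) : ENNReal :=
  ∫⁻ Z, ENNReal.ofReal |poissonForm e w Z| * ENNReal.ofReal (exp (-‖Z‖ ^ 2))

theorem gaussianPoissonForm_smul_self (s : ℝ) (a : E) :
    gaussianPoissonForm (s • a) (s • a) = ENNReal.ofReal (s ^ 2) * gaussianPoissonForm a a := by
  simp only [gaussianPoissonForm, poissonForm_smul_self, abs_mul, abs_sq,
    ENNReal.ofReal_mul (sq_nonneg s), mul_assoc]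
  exact lintegral_const_mul _ (by fun_prop)

theorem gaussianPoissonForm_self_eq_of_norm_eq {a b : E} (h : ‖a‖ = ‖b‖) :
    gaussianPoissonForm a a = gaussianPoissonForm b b := by
  obtain ⟨R, rfl⟩ : ∃ R : E ≃ₗᵢ[ℝ] E, R a = b := ⟨_, Submodule.reflection_sub h⟩
  unfold gaussianPoissonForm
  rw [← R.measurePreserving.lintegral_comp (f := fun Z =>
    ENNReal.ofReal |poissonForm (R a) (R a) Z| * ENNReal.ofReal (exp (-‖Z‖ ^ 2))) (by fun_prop)]
  simp only [poissonForm_map, LinearIsometryEquiv.norm_map]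

theorem gaussianPoissonForm_self {e : E} (he : ‖e‖ = 1) (a : E) :
    gaussianPoissonForm a a = ENNReal.ofReal (‖a‖ ^ 2) * gaussianPoissonForm e e := by
  rw [← gaussianPoissonForm_smul_self]
  exact gaussianPoissonForm_self_eq_of_norm_eq (by rw [norm_smul, he, norm_norm, mul_one])

theorem gaussianPoissonForm_le_polarization (e w : E) :
    gaussianPoissonForm e w ≤ ENNReal.ofReal (1 / 4) * gaussianPoissonForm (e + w) (e + w) +
      ENNReal.ofReal (1 / 4) * gaussianPoissonForm (e - w) (e - w) := by
  simp only [gaussianPoissonForm]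
  rw [← lintegral_const_mul _ (by fun_prop), ← lintegral_const_mul _ (by fun_prop),
    ← lintegral_add_left (by fun_prop)]
  refine lintegral_mono fun Z => ?_
  simp only [← mul_assoc, ← add_mul]
  gcongr
  rw [← ENNReal.ofReal_mul (by norm_num), ← ENNReal.ofReal_mul (by norm_num),
    ← ENNReal.ofReal_add (by positivity) (by positivity), poissonForm_polarization]
  refine ENNReal.ofReal_le_ofReal ((abs_sub _ _).trans_eq ?_)
  rw [abs_mul, abs_mul, abs_of_pos (by norm_num : (0 : ℝ) < 1 / 4)]

theorem gaussianPoissonForm_le_self {e w : E} (he : ‖e‖ = 1) (hw : ‖w‖ = 1) :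
    gaussianPoissonForm e w ≤ gaussianPoissonForm e e := by
  have hparallelogram : 1 / 4 * ‖e + w‖ ^ 2 + 1 / 4 * ‖e - w‖ ^ 2 = 1 := by
    rw [norm_add_sq_real, norm_sub_sq_real, he, hw]
    ring
  refine (gaussianPoissonForm_le_polarization e w).trans_eq ?_
  rw [gaussianPoissonForm_self he (e + w), gaussianPoissonForm_self he (e - w), ← mul_assoc,
    ← mul_assoc, ← add_mul, ← ENNReal.ofReal_mul (by norm_num), ← ENNReal.ofReal_mul (by norm_num),
    ← ENNReal.ofReal_add (by positivity) (by positivity), hparallelogram, ENNReal.ofReal_one,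
    one_mul]

theorem gaussianPoissonForm_eq_lintegral_hyperplane {e : E} (he : ‖e‖ = 1) (w : E) :
    gaussianPoissonForm e w = ENNReal.ofReal (Gamma (((finrank ℝ E + 2 : ℕ) : ℝ) / 2)) *
      ∫⁻ y : hyperplane e, ENNReal.ofReal |poissonForm e w (y + e)| *
        ENNReal.ofReal (‖(y : E) + e‖ ^ (finrank ℝ E + 2))⁻¹ :=
  lintegral_mul_gaussian_of_homogeneous he (by fun_prop) fun s Z => by
    rw [poissonForm_smul_right, abs_mul, abs_pow, ENNReal.ofReal_mul (by positivity)]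

theorem lintegral_abs_poissonForm_le_self {e w : E} (he : ‖e‖ = 1) (hw : ‖w‖ = 1) :
    ∫⁻ y : hyperplane e, ENNReal.ofReal |poissonForm e w (y + e)| *
        ENNReal.ofReal (‖(y : E) + e‖ ^ (finrank ℝ E + 2))⁻¹ ≤
      ∫⁻ y : hyperplane e, ENNReal.ofReal |poissonForm e e (y + e)| *
        ENNReal.ofReal (‖(y : E) + e‖ ^ (finrank ℝ E + 2))⁻¹ := by
  have hGamma : 0 < Gamma (((finrank ℝ E + 2 : ℕ) : ℝ) / 2) := Gamma_pos_of_pos (by positivity)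
  have hle := gaussianPoissonForm_le_self he hw
  rwa [gaussianPoissonForm_eq_lintegral_hyperplane he,
    gaussianPoissonForm_eq_lintegral_hyperplane he,
    ENNReal.mul_le_mul_iff_right (ENNReal.ofReal_pos.mpr hGamma).ne' ENNReal.ofReal_ne_top] at hle

end PoissonForm

section RadialIntegral

theorem integral_Ioi_abs_deriv_of_unimodal {g g' : ℝ → ℝ} {c a l : ℝ} (hca : c ≤ a)
    (hderiv : ∀ r, HasDerivAt g (g' r) r) (hinc : ∀ r ∈ Set.Ioc c a, 0 ≤ g' r)
    (hdec : ∀ r ∈ Set.Ioi a, g' r ≤ 0) (hlim : Tendsto g atTop (𝓝 l)) :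
    ∫ r in Set.Ioi c, |g' r| = 2 * g a - g c - l := by
  have hcont : Continuous g := continuous_iff_continuousAt.mpr fun r => (hderiv r).continuousAt
  have hleft : IntegrableOn g' (Set.Ioc c a) :=
    intervalIntegral.integrableOn_deriv_of_nonneg hcont.continuousOn (fun r _ => hderiv r)
      fun r hr => hinc r (Set.Ioo_subset_Ioc_self hr)
  have hright : IntegrableOn g' (Set.Ioi a) :=
    integrableOn_Ioi_deriv_of_nonpos' (fun r _ => hderiv r) hdec hlim
  have habs_left : ∫ r in Set.Ioc c a, |g' r| = g a - g c := by
    rw [setIntegral_congr_fun measurableSet_Ioc fun r hr => abs_of_nonneg (hinc r hr),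
      ← intervalIntegral.integral_of_le hca]
    exact intervalIntegral.integral_eq_sub_of_hasDerivAt (fun r _ => hderiv r)
      ((intervalIntegrable_iff_integrableOn_Ioc_of_le hca).mpr hleft)
  have habs_right : ∫ r in Set.Ioi a, |g' r| = g a - l := by
    rw [setIntegral_congr_fun measurableSet_Ioi fun r hr => abs_of_nonpos (hdec r hr),
      integral_neg, integral_Ioi_of_hasDerivAt_of_nonpos' (fun r _ => hderiv r) hdec hlim]
    ring
  rw [← Set.Ioc_union_Ioi_eq_Ioi hca,
    setIntegral_union (Set.Ioc_disjoint_Ioi le_rfl) measurableSet_Ioi hleft.abs hright.abs,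
    habs_left, habs_right]
  ring

theorem hasDerivAt_pow_div_sqrt_pow {m : ℕ} (hm : 0 < m) (r : ℝ) :
    HasDerivAt (fun r : ℝ => r ^ m / √(r ^ 2 + 1) ^ (m + 1))
      (r ^ (m - 1) * ((m - r ^ 2) * (√(r ^ 2 + 1) ^ (m + 3))⁻¹)) r := by
  have hpos : 0 < √(r ^ 2 + 1) := by positivity
  have hsq : √(r ^ 2 + 1) ^ 2 = r ^ 2 + 1 := sq_sqrt (by positivity)
  have hsqrt : HasDerivAt (fun r : ℝ => √(r ^ 2 + 1)) (r / √(r ^ 2 + 1)) r := by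
    convert ((hasDerivAt_pow 2 r).add_const 1).sqrt (by positivity) using 1
    push_cast
    field_simp
  refine ((hasDerivAt_pow m r).fun_div (hsqrt.fun_pow (m + 1)) (by positivity)).congr_deriv ?_
  obtain ⟨k, rfl⟩ : ∃ k, m = k + 1 := ⟨m - 1, by omega⟩
  simp only [Nat.add_sub_cancel]
  generalize √(r ^ 2 + 1) = ρ at hpos hsq
  field_simp
  push_cast
  linear_combination (k + 1) * r ^ k * ρ ^ (2 * k + 5) * hsq

theorem tendsto_pow_div_sqrt_pow_atTop (m : ℕ) :
    Tendsto (fun r : ℝ => r ^ m / √(r ^ 2 + 1) ^ (m + 1)) atTop (𝓝 0) := by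
  refine squeeze_zero' ?_ ?_ tendsto_inv_atTop_zero
  · filter_upwards [eventually_gt_atTop 0] with r hr
    positivity
  · filter_upwards [eventually_gt_atTop 0] with r hr
    have hle : r ≤ √(r ^ 2 + 1) := le_sqrt_of_sq_le (by linarith)
    calc r ^ m / √(r ^ 2 + 1) ^ (m + 1) ≤ r ^ m / r ^ (m + 1) := by gcongr
      _ = r⁻¹ := by rw [pow_succ]; field_simp

theorem integral_Ioi_pow_mul_abs_sub_div_sqrt_pow {m : ℕ} (hm : 0 < m) :
    ∫ r in Set.Ioi (0 : ℝ), r ^ (m - 1) * (|r ^ 2 - m| * (√(r ^ 2 + 1) ^ (m + 3))⁻¹) =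
      2 * (√m ^ m / √(m + 1) ^ (m + 1)) := by
  have hsq : √(m : ℝ) ^ 2 = m := sq_sqrt m.cast_nonneg
  have hinc : ∀ r ∈ Set.Ioc 0 √(m : ℝ), (0 : ℝ) ≤ m - r ^ 2 := fun r hr => by
    nlinarith [hr.1, hr.2]
  have hdec : ∀ r ∈ Set.Ioi √(m : ℝ), (m : ℝ) - r ^ 2 ≤ 0 := fun r (hr : _ < r) => by
    nlinarith [sqrt_nonneg (m : ℝ)]
  have hunimodal := integral_Ioi_abs_deriv_of_unimodal (sqrt_nonneg (m : ℝ))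
    (hasDerivAt_pow_div_sqrt_pow hm)
    (fun r hr => by have := hinc r hr; have := hr.1; positivity)
    (fun r hr => by
      have hr0 : 0 ≤ r := (sqrt_nonneg _).trans (le_of_lt hr)
      exact mul_nonpos_of_nonneg_of_nonpos (by positivity)
        (mul_nonpos_of_nonpos_of_nonneg (hdec r hr) (by positivity)))
    (tendsto_pow_div_sqrt_pow_atTop m)
  rw [hsq, zero_pow hm.ne', zero_div, sub_zero, sub_zero] at hunimodal
  rw [← hunimodal]
  refine setIntegral_congr_fun measurableSet_Ioi fun r (hr : 0 < r) => ?_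
  rw [abs_mul, abs_mul, abs_of_pos (by positivity : 0 < r ^ (m - 1)), abs_sub_comm,
    abs_of_pos (by positivity : 0 < (√(r ^ 2 + 1) ^ (m + 3))⁻¹)]

variable {E : Type*} [NormedAddCommGroup E] [InnerProductSpace ℝ E] [FiniteDimensional ℝ E]
  {e : E}

theorem Cconst_mul_sphereArea_div_two {m : ℕ} :
    Cconst (m + 1) * (sphereArea (m + 1) / 2) =
      sphereArea m * (2 * (√m ^ m / √(m + 1) ^ (m + 1))) := by
  have harea := sphereArea_pos m.succ_pos
  have hdim : ((m + 1 : ℕ) : ℝ) - 1 = m := by push_cast; ring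
  have hpow : (((m + 1 : ℕ) : ℝ)) ^ (((m + 1 : ℕ) : ℝ) / 2) = √(m + 1) ^ (m + 1) := by
    rw [rpow_div_two_eq_sqrt _ (by positivity), rpow_natCast, Nat.cast_succ]
  rw [Cconst, hdim, hpow, rpow_div_two_eq_sqrt _ m.cast_nonneg, rpow_natCast, Nat.add_sub_cancel]
  field_simp
  ring

variable [MeasurableSpace E] [BorelSpace E]

theorem integral_abs_poissonForm_self (he : ‖e‖ = 1) (hn : 2 ≤ finrank ℝ E) :
    ∫ y : hyperplane e, |poissonForm e e (y + e)| * (‖(y : E) + e‖ ^ (finrank ℝ E + 2))⁻¹ =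
      Cconst (finrank ℝ E) * (sphereArea (finrank ℝ E) / 2) := by
  have hdim := finrank_hyperplane_add_one he
  have hpos : 0 < finrank ℝ (hyperplane e) := by omega
  have := nontrivial_of_finrank_pos hpos
  have hpolar := integral_fun_norm_addHaar (volume : Measure (hyperplane e)) fun r =>
    |r ^ 2 - finrank ℝ (hyperplane e)| * (√(r ^ 2 + 1) ^ (finrank ℝ (hyperplane e) + 3))⁻¹
  simp only [nsmul_eq_mul, smul_eq_mul] at hpolar
  rw [integral_Ioi_pow_mul_abs_sub_div_sqrt_pow hpos, ← mul_assoc,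
    finrank_mul_volume_real_ball_eq_sphereArea, ← Cconst_mul_sphereArea_div_two, hdim] at hpolar
  rw [← hpolar]
  refine integral_congr_ae (.of_forall fun y => ?_)
  beta_reduce
  rw [poissonForm_self_hyperplane_add he, ← norm_hyperplane_add_sq he, sqrt_sq (norm_nonneg _),
    ← hdim]

theorem Cconst_pos {n : ℕ} (hn : 2 ≤ n) : 0 < Cconst n := by
  obtain ⟨m, rfl⟩ : ∃ m, n = m + 1 := ⟨n - 1, by omega⟩
  have hm : 0 < m := by omega
  have := sphereArea_pos hm
  refine pos_of_mul_pos_left ?_ (half_pos (sphereArea_pos m.succ_pos)).le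
  rw [Cconst_mul_sphereArea_div_two]
  positivity

theorem integral_abs_poissonForm_le (he : ‖e‖ = 1) (hn : 2 ≤ finrank ℝ E) {w : E}
    (hw : ‖w‖ = 1) :
    ∫ y : hyperplane e, |poissonForm e w (y + e)| * (‖(y : E) + e‖ ^ (finrank ℝ E + 2))⁻¹ ≤
      Cconst (finrank ℝ E) * (sphereArea (finrank ℝ E) / 2) := by
  have hfinite : Integrable fun y : hyperplane e =>
      |poissonForm e e (y + e)| * (‖(y : E) + e‖ ^ (finrank ℝ E + 2))⁻¹ := by
    refine .of_integral_ne_zero ?_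
    rw [integral_abs_poissonForm_self he hn]
    exact (mul_pos (Cconst_pos hn) (half_pos (sphereArea_pos (by omega)))).ne'
  rw [← integral_abs_poissonForm_self he hn,
    integral_eq_lintegral_of_nonneg_ae (.of_forall fun _ => by positivity)
      (Measurable.aestronglyMeasurable (by fun_prop)),
    integral_eq_lintegral_of_nonneg_ae (.of_forall fun _ => by positivity) hfinite.1]
  refine ENNReal.toReal_mono hfinite.lintegral_lt_top.ne ?_
  simp only [ENNReal.ofReal_mul (abs_nonneg _)]
  exact lintegral_abs_poissonForm_le_self he hw

end RadialIntegral

section LineDerivatives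

variable {E : Type*} [NormedAddCommGroup E] [InnerProductSpace ℝ E]

theorem hasLineDerivAt_fun_mul {f g : E → ℝ} {f' g' : ℝ} {x v : E}
    (hf : HasLineDerivAt ℝ f f' x v) (hg : HasLineDerivAt ℝ g g' x v) :
    HasLineDerivAt ℝ (fun y => f y * g y) (f' * g x + f x * g') x v := by
  simpa [HasLineDerivAt] using HasDerivAt.fun_mul hf hg

theorem hasLineDerivAt_inner_const (e x v : E) :
    HasLineDerivAt ℝ (fun y => ⟪y, e⟫) ⟪v, e⟫ x v := by
  simpa using ((hasFDerivAt_id x).inner ℝ (hasFDerivAt_const e x)).hasLineDerivAt v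

theorem hasLineDerivAt_norm_sq (x v : E) :
    HasLineDerivAt ℝ (fun y => ‖y‖ ^ 2) (2 * ⟪x, v⟫) x v := by
  simpa using (hasStrictFDerivAt_norm_sq x).hasFDerivAt.hasLineDerivAt v

theorem hasDerivAt_comp_line {f : E → ℝ} {f' : ℝ} {x v : E} {s : ℝ}
    (hf : HasLineDerivAt ℝ f f' (x + s • v) v) : HasDerivAt (fun t : ℝ => f (x + t • v)) f' s := by
  have hshift : HasDerivAt (fun t : ℝ => f (x + s • v + t • v)) f' (s - s) := by
    rwa [sub_self]
  convert! hshift.comp_sub_const s s using 3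
  module

theorem nonpos_of_isLocalMax_of_hasDerivAt {f f' : ℝ → ℝ} {c s : ℝ} (hmax : IsLocalMax f s)
    (hf : ∀ᶠ t in 𝓝 s, HasDerivAt f (f' t) t) (hf' : HasDerivAt f' c s) : c ≤ 0 := by
  by_contra! hc
  have hderiv : deriv f =ᶠ[𝓝 s] f' := hf.mono fun t ht => ht.deriv
  have hderiv2 : deriv (deriv f) s = c := by rw [hderiv.deriv_eq, hf'.deriv]
  have hmin : IsLocalMin f s := isLocalMin_of_deriv_deriv_pos (hderiv2 ▸ hc) hmax.deriv_eq_zero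
    hf.self_of_nhds.continuousAt
  have hconst : f =ᶠ[𝓝 s] fun _ => f s := by
    filter_upwards [hmax, hmin] with t ht ht'
    exact le_antisymm ht ht'
  have : deriv (deriv f) s = 0 := by rw [hconst.deriv.deriv_eq]; simp
  linarith

/-- `c` is the second derivative of `f` at `x` in the direction `v`. Unlike `HarmonicAt`, this
only constrains `f` along lines, so it can be checked by differentiating an integral under the
integral sign one direction at a time. -/
def HasSecondLineDerivAt (f : E → ℝ) (c : ℝ) (x v : E) : Prop :=
  ∃ f' : E → ℝ, (∀ᶠ y in 𝓝 x, HasLineDerivAt ℝ f (f' y) y v) ∧ HasLineDerivAt ℝ f' c x v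

namespace HasSecondLineDerivAt

variable {f g : E → ℝ} {c d : ℝ} {x v : E}

theorem sub (hf : HasSecondLineDerivAt f c x v) (hg : HasSecondLineDerivAt g d x v) :
    HasSecondLineDerivAt (fun y => f y - g y) (c - d) x v := by
  obtain ⟨f', hf, hf'⟩ := hf
  obtain ⟨g', hg, hg'⟩ := hg
  refine ⟨fun y => f' y - g' y, ?_, HasDerivAt.fun_sub hf' hg'⟩
  filter_upwards [hf, hg] with y hfy hgy
  exact HasDerivAt.fun_sub hfy hgy

theorem nonpos_of_isLocalMax (hf : HasSecondLineDerivAt f c x v) (hmax : IsLocalMax f x) :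
    c ≤ 0 := by
  obtain ⟨f', hf, hf'⟩ := hf
  have hline : Tendsto (fun t : ℝ => x + t • v) (𝓝 0) (𝓝 x) :=
    Continuous.tendsto' (by fun_prop) _ _ (by simp)
  refine nonpos_of_isLocalMax_of_hasDerivAt ?_ ((hline.eventually hf).mono fun t ht =>
    hasDerivAt_comp_line ht) hf'
  simpa [IsLocalMax, IsMaxFilter] using hline.eventually hmax

end HasSecondLineDerivAt

theorem hasSecondLineDerivAt_of_contDiffAt {f : E → ℝ} {x : E}
    (hf : ContDiffAt ℝ 2 f x) (v : E) :
    HasSecondLineDerivAt f (iteratedFDeriv ℝ 2 f x ![v, v]) x v := by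
  refine ⟨fun y => fderiv ℝ f y v, ?_, ?_⟩
  · filter_upwards [hf.eventually (by simp)] with y hy
    exact (hy.differentiableAt two_ne_zero).hasFDerivAt.hasLineDerivAt v
  · have hf' : DifferentiableAt ℝ (fderiv ℝ f) x :=
      (hf.fderiv_right (m := 1) (by norm_num)).differentiableAt one_ne_zero
    rw [iteratedFDeriv_two_apply]
    exact (hf'.hasFDerivAt.clm_apply (hasFDerivAt_const v x)).hasLineDerivAt v |>.congr_deriv
      (by simp)

end LineDerivatives

section Laplacian

variable {E ι : Type*} [NormedAddCommGroup E] [InnerProductSpace ℝ E] [Fintype ι]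
  {b : OrthonormalBasis ι ℝ E}

/-- The second derivatives of `f` at `x` along the orthonormal basis `b` exist and sum to `L`. -/
def HasLaplacianAt (b : OrthonormalBasis ι ℝ E) (f : E → ℝ) (L : ℝ) (x : E) : Prop :=
  ∃ c : ι → ℝ, (∀ i, HasSecondLineDerivAt f (c i) x (b i)) ∧ ∑ i, c i = L

namespace HasLaplacianAt

variable {f g : E → ℝ} {L M : ℝ} {x : E}

theorem sub (hf : HasLaplacianAt b f L x) (hg : HasLaplacianAt b g M x) :
    HasLaplacianAt b (fun y => f y - g y) (L - M) x := by
  obtain ⟨c, hc, rfl⟩ := hf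
  obtain ⟨d, hd, rfl⟩ := hg
  exact ⟨fun i => c i - d i, fun i => (hc i).sub (hd i), Finset.sum_sub_distrib _ _⟩

theorem nonpos_of_isLocalMax (hf : HasLaplacianAt b f L x) (hmax : IsLocalMax f x) : L ≤ 0 := by
  obtain ⟨c, hc, rfl⟩ := hf
  exact Finset.sum_nonpos fun i _ => (hc i).nonpos_of_isLocalMax hmax

theorem of_harmonicAt [FiniteDimensional ℝ E] (hf : HarmonicAt f x) : HasLaplacianAt b f 0 x := by
  refine ⟨_, fun i => hasSecondLineDerivAt_of_contDiffAt hf.1 (b i), ?_⟩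
  have := hf.2.self_of_nhds
  rwa [laplacian_eq_iteratedFDeriv_orthonormalBasis f b] at this

end HasLaplacianAt

theorem nonpos_of_forall_nonpos_or_hasLaplacianAt_pos {K : Set E} (hK : IsCompact K) {f : E → ℝ}
    (hf : ContinuousOn f K)
    (hlap : ∀ y ∈ K, f y ≤ 0 ∨ K ∈ 𝓝 y ∧ ∃ L > 0, HasLaplacianAt b f L y) {x : E} (hx : x ∈ K) :
    f x ≤ 0 := by
  obtain ⟨y, hyK, hmax⟩ := hK.exists_isMaxOn ⟨x, hx⟩ hf
  refine (hmax hx).trans ?_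
  obtain hy | ⟨hKy, L, hL, hlapy⟩ := hlap y hyK
  · exact hy
  · exact absurd (hlapy.nonpos_of_isLocalMax (hmax.isLocalMax hKy)) hL.not_ge

end Laplacian

section PhragmenLindelof

variable {E : Type*} [NormedAddCommGroup E] [InnerProductSpace ℝ E]

/-- A strictly superharmonic barrier in the slab `{0 ≤ ⟪Y, e⟫ ≤ T}`: it is nonnegative there, at
least `κ * T` on the face `⟪Y, e⟫ = T`, and at least `ε * R ^ 2` where `‖Y‖ = R`. -/
def slabBarrier (e : E) (κ ε T : ℝ) (Y : E) : ℝ :=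
  κ * ⟪Y, e⟫ + ε * (‖Y‖ ^ 2 + (finrank ℝ E + 1) * (T ^ 2 - ⟪Y, e⟫ ^ 2))

variable {e : E} {κ ε T : ℝ}

theorem continuous_slabBarrier : Continuous (slabBarrier e κ ε T) := by
  unfold slabBarrier
  fun_prop

theorem hasSecondLineDerivAt_slabBarrier (Y w : E) :
    HasSecondLineDerivAt (slabBarrier e κ ε T)
      (2 * ε * (‖w‖ ^ 2 - (finrank ℝ E + 1) * ⟪e, w⟫ ^ 2)) Y w := by
  refine ⟨fun X => κ * ⟪w, e⟫ + ε * (2 * ⟪X, w⟫ + (finrank ℝ E + 1) * (-(2 * ⟪w, e⟫ * ⟪X, e⟫))),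
    .of_forall fun X => ?_, ?_⟩
  · have hinner := hasLineDerivAt_inner_const e X w
    have hsq := hasLineDerivAt_fun_mul hinner hinner
    unfold HasLineDerivAt at *
    convert! (hinner.const_mul κ).fun_add (((hasLineDerivAt_norm_sq X w).fun_add
      ((hsq.const_sub (T ^ 2)).const_mul (finrank ℝ E + 1 : ℝ))).const_mul ε) using 1
    · ext t
      rw [slabBarrier, sq ⟪_, e⟫]
    · ring
  · have hw := hasLineDerivAt_inner_const w Y w
    have he := hasLineDerivAt_inner_const e Y w
    unfold HasLineDerivAt at *
    convert! (((hw.const_mul 2).fun_add ((he.const_mul (2 * ⟪w, e⟫)).fun_neg.const_mul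
      (finrank ℝ E + 1 : ℝ))).const_mul ε).const_add (κ * ⟪w, e⟫) using 1
    rw [real_inner_self_eq_norm_sq, real_inner_comm w e]
    ring

theorem hasLaplacianAt_slabBarrier {ι : Type*} [Fintype ι] (b : OrthonormalBasis ι ℝ E)
    (he : ‖e‖ = 1) (Y : E) : HasLaplacianAt b (slabBarrier e κ ε T) (-(2 * ε)) Y := by
  refine ⟨_, fun i => hasSecondLineDerivAt_slabBarrier Y (b i), ?_⟩
  have hcard : (Fintype.card ι : ℝ) = finrank ℝ E := by
    exact_mod_cast (finrank_eq_card_basis b.toBasis).symm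
  have hparseval : ∑ i, ⟪e, b i⟫ ^ 2 = 1 := by
    rw [← one_pow 2, ← he, ← b.sum_sq_norm_inner_left e]
    simp
  simp only [b.norm_eq_one, one_pow, ← Finset.mul_sum, Finset.sum_sub_distrib, hparseval,
    Finset.sum_const, Finset.card_univ, nsmul_eq_mul, hcard]
  ring

theorem le_slabBarrier (hε : 0 ≤ ε) {Y : E} (hY : 0 ≤ ⟪Y, e⟫) (hYT : ⟪Y, e⟫ ≤ T) :
    κ * ⟪Y, e⟫ + ε * ‖Y‖ ^ 2 ≤ slabBarrier e κ ε T Y := by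
  have : 0 ≤ T ^ 2 - ⟪Y, e⟫ ^ 2 := sub_nonneg.mpr (by gcongr)
  rw [slabBarrier, mul_add, ← add_assoc]
  exact le_add_of_nonneg_right (by positivity)

variable [FiniteDimensional ℝ E] {w : E → ℝ} {S : ℝ} {ι : Type*} [Fintype ι]
  {b : OrthonormalBasis ι ℝ E}

theorem le_slabBarrier_of_hasLaplacianAt_zero_of_norm_le (he : ‖e‖ = 1)
    (hcont : ContinuousOn w {X | 0 ≤ ⟪X, e⟫})
    (hbdd : ∀ X, 0 ≤ ⟪X, e⟫ → w X ≤ S) (hbdry : ∀ X, ⟪X, e⟫ = 0 → w X ≤ 0)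
    (hlap : ∀ X, 0 < ⟪X, e⟫ → HasLaplacianAt b w 0 X) (hS : 0 ≤ S) (hT : 0 < T) (hε : 0 < ε)
    {R : ℝ} (hR : S ≤ ε * R ^ 2) {X : E} (hX : 0 ≤ ⟪X, e⟫) (hXT : ⟪X, e⟫ ≤ T) (hXR : ‖X‖ ≤ R) :
    w X ≤ slabBarrier e (S / T) ε T X := by
  have hinner : Continuous fun Y : E => ⟪Y, e⟫ := by fun_prop
  let K : Set E := closedBall 0 R ∩ ({Y | 0 ≤ ⟪Y, e⟫} ∩ {Y | ⟪Y, e⟫ ≤ T})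
  have hK : IsCompact K := (isCompact_closedBall _ _).inter_right
    ((isClosed_le continuous_const hinner).inter (isClosed_le hinner continuous_const))
  refine sub_nonpos.mp (nonpos_of_forall_nonpos_or_hasLaplacianAt_pos (b := b) hK
    (f := fun Y => w Y - slabBarrier e (S / T) ε T Y)
    ((hcont.mono fun Y hY => hY.2.1).sub continuous_slabBarrier.continuousOn) ?_
    ⟨mem_closedBall_zero_iff.mpr hXR, hX, hXT⟩)
  rintro Y ⟨hYR, hY0 : 0 ≤ ⟪Y, e⟫, hYT : ⟪Y, e⟫ ≤ T⟩
  rw [mem_closedBall_zero_iff] at hYR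
  have hbarrier := le_slabBarrier (κ := S / T) hε.le hY0 hYT
  have hκ : 0 ≤ S / T * ⟪Y, e⟫ := by positivity
  have hε' : 0 ≤ ε * ‖Y‖ ^ 2 := by positivity
  obtain hY0 | hY0 := hY0.eq_or_lt
  · left
    linarith [hbdry Y hY0.symm]
  obtain hYT | hYT := hYT.eq_or_lt
  · left
    have : S / T * ⟪Y, e⟫ = S := by rw [hYT, div_mul_cancel₀ _ hT.ne']
    linarith [hbdd Y hY0.le]
  obtain rfl | hYR := hYR.eq_or_lt
  · left
    linarith [hbdd Y hY0.le]
  refine .inr ⟨?_, 0 - -(2 * ε), by simpa, (hlap Y hY0).sub (hasLaplacianAt_slabBarrier b he Y)⟩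
  exact inter_mem (closedBall_mem_nhds_of_mem (mem_ball_zero_iff.mpr hYR)) (inter_mem
    (hinner.continuousAt.eventually_const_le hY0) (hinner.continuousAt.eventually_le_const hYT))

theorem le_slabBarrier_of_hasLaplacianAt_zero (he : ‖e‖ = 1)
    (hcont : ContinuousOn w {X | 0 ≤ ⟪X, e⟫})
    (hbdd : ∀ X, 0 ≤ ⟪X, e⟫ → w X ≤ S) (hbdry : ∀ X, ⟪X, e⟫ = 0 → w X ≤ 0)
    (hlap : ∀ X, 0 < ⟪X, e⟫ → HasLaplacianAt b w 0 X) (hS : 0 ≤ S) (hT : 0 < T) (hε : 0 < ε)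
    {X : E} (hX : 0 ≤ ⟪X, e⟫) (hXT : ⟪X, e⟫ ≤ T) : w X ≤ slabBarrier e (S / T) ε T X := by
  have hR : S ≤ ε * (‖X‖ + √(S / ε)) ^ 2 := by
    calc S = ε * √(S / ε) ^ 2 := by rw [sq_sqrt (by positivity)]; field_simp
      _ ≤ ε * (‖X‖ + √(S / ε)) ^ 2 := by gcongr; exact le_add_of_nonneg_left (norm_nonneg X)
  exact le_slabBarrier_of_hasLaplacianAt_zero_of_norm_le he hcont hbdd hbdry hlap hS hT hε hR hX hXT
    (le_add_of_nonneg_right (sqrt_nonneg _))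

theorem nonpos_on_halfSpace_of_hasLaplacianAt_zero (he : ‖e‖ = 1)
    (hcont : ContinuousOn w {X | 0 ≤ ⟪X, e⟫})
    (hbdd : ∀ X, 0 ≤ ⟪X, e⟫ → w X ≤ S) (hbdry : ∀ X, ⟪X, e⟫ = 0 → w X ≤ 0)
    (hlap : ∀ X, 0 < ⟪X, e⟫ → HasLaplacianAt b w 0 X) {X : E} (hX : 0 ≤ ⟪X, e⟫) : w X ≤ 0 := by
  have hslab (T : ℝ) (hXT : ⟪X, e⟫ < T) : w X ≤ max S 0 / T * ⟪X, e⟫ := by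
    have hlim : Tendsto (fun ε => slabBarrier e (max S 0 / T) ε T X) (𝓝[>] 0)
        (𝓝 (max S 0 / T * ⟪X, e⟫)) := by
      refine (Continuous.tendsto' ?_ 0 _ (by simp [slabBarrier])).mono_left nhdsWithin_le_nhds
      unfold slabBarrier
      fun_prop
    refine ge_of_tendsto hlim ?_
    filter_upwards [self_mem_nhdsWithin] with ε hε
    exact le_slabBarrier_of_hasLaplacianAt_zero he hcont
      (fun Y hY => (hbdd Y hY).trans (le_max_left S 0)) hbdry hlap (le_max_right S 0)
      (hX.trans_lt hXT) hε hX hXT.le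
  have hlim : Tendsto (fun T => max S 0 / T * ⟪X, e⟫) atTop (𝓝 0) := by
    simpa using (tendsto_id.const_div_atTop (max S 0)).mul_const ⟪X, e⟫
  refine ge_of_tendsto hlim ?_
  filter_upwards [eventually_gt_atTop ⟪X, e⟫] with T hXT
  exact hslab T hXT

end PhragmenLindelof

section PoissonKernel

variable {E : Type*} [NormedAddCommGroup E] [InnerProductSpace ℝ E] {e w Z : E}

/-- The Poisson kernel of the half-space `{0 < ⟪Z, e⟫}` for a unit vector `e`, up to the
normalizing factor `2 / sphereArea n`. -/
def halfSpacePoissonKernel (e Z : E) : ℝ := ⟪Z, e⟫ * (‖Z‖ ^ finrank ℝ E)⁻¹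

/-- The cubic form in `Z` for which `poissonHessian e w Z / ‖Z‖ ^ (n + 4)` is the second derivative
of the Poisson kernel in the direction `w`, where `n` is the dimension. -/
def poissonHessian (e w Z : E) : ℝ :=
  ((2 - finrank ℝ E) * (⟪w, e⟫ * ⟪Z, w⟫) - finrank ℝ E * ⟪Z, e⟫ * ‖w‖ ^ 2) * ‖Z‖ ^ 2 -
    (finrank ℝ E + 2) * ⟪Z, w⟫ * poissonForm e w Z

theorem continuous_poissonHessian : Continuous (poissonHessian e w) := by
  unfold poissonHessian
  fun_prop

theorem ne_zero_of_inner_pos (hZ : 0 < ⟪Z, e⟫) : Z ≠ 0 := by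
  rintro rfl
  simp at hZ

theorem continuousOn_mul_inv_norm_pow {q : E → ℝ} (hq : Continuous q) (k : ℕ) :
    ContinuousOn (fun Z => q Z * (‖Z‖ ^ k)⁻¹) {Z | 0 < ⟪Z, e⟫} := by
  refine hq.continuousOn.mul (ContinuousOn.inv₀ (by fun_prop) fun Z hZ => ?_)
  have : Z ≠ 0 := ne_zero_of_inner_pos hZ
  positivity

theorem inv_pow_eq_sq_mul_inv_pow {r : ℝ} (hr : r ≠ 0) (k : ℕ) :
    (r ^ k)⁻¹ = r ^ 2 * (r ^ (k + 2))⁻¹ := by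
  field_simp
  ring

theorem hasLineDerivAt_inv_norm_pow (hZ : Z ≠ 0) (w : E) (k : ℕ) :
    HasLineDerivAt ℝ (fun Z => (‖Z‖ ^ k)⁻¹) (-(k * ⟪Z, w⟫ * (‖Z‖ ^ (k + 2))⁻¹)) Z w := by
  have hnorm : HasLineDerivAt ℝ (fun Z => ‖Z‖) (⟪Z, w⟫ / ‖Z‖) Z w := by
    have := HasDerivAt.sqrt (hasLineDerivAt_norm_sq Z w) (by simpa using hZ)
    simp only [sqrt_sq (norm_nonneg _), zero_smul, add_zero] at this
    exact this.congr_deriv (mul_div_mul_left _ _ two_ne_zero)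
  have hZ' : ‖Z‖ ≠ 0 := norm_ne_zero_iff.mpr hZ
  have := (HasDerivAt.fun_pow hnorm k).fun_inv (by simpa using fun h => absurd h hZ)
  refine this.congr_deriv ?_
  simp only [zero_smul, add_zero]
  obtain _ | k := k
  · simp
  · rw [Nat.add_sub_cancel]
    field_simp
    ring

theorem hasLineDerivAt_halfSpacePoissonKernel (hZ : Z ≠ 0) (e w : E) :
    HasLineDerivAt ℝ (halfSpacePoissonKernel e)
      (poissonForm e w Z * (‖Z‖ ^ (finrank ℝ E + 2))⁻¹) Z w := by
  refine (hasLineDerivAt_fun_mul (hasLineDerivAt_inner_const e Z w)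
    (hasLineDerivAt_inv_norm_pow hZ w (finrank ℝ E))).congr_deriv ?_
  rw [inv_pow_eq_sq_mul_inv_pow (norm_ne_zero_iff.mpr hZ), poissonForm]
  ring

theorem hasLineDerivAt_poissonForm (e w Z : E) :
    HasLineDerivAt ℝ (poissonForm e w)
      ((2 - finrank ℝ E) * (⟪w, e⟫ * ⟪Z, w⟫) - finrank ℝ E * ⟪Z, e⟫ * ‖w‖ ^ 2) Z w := by
  have hprod := hasLineDerivAt_fun_mul (hasLineDerivAt_inner_const e Z w)
    (hasLineDerivAt_inner_const w Z w)
  refine ((HasDerivAt.const_mul ⟪w, e⟫ (hasLineDerivAt_norm_sq Z w)).fun_sub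
    (HasDerivAt.const_mul (finrank ℝ E : ℝ) hprod)).congr_deriv ?_
  rw [real_inner_self_eq_norm_sq]
  ring

theorem hasLineDerivAt_poissonForm_mul_inv_norm_pow (hZ : Z ≠ 0) (e w : E) :
    HasLineDerivAt ℝ (fun Z => poissonForm e w Z * (‖Z‖ ^ (finrank ℝ E + 2))⁻¹)
      (poissonHessian e w Z * (‖Z‖ ^ (finrank ℝ E + 4))⁻¹) Z w := by
  refine (hasLineDerivAt_fun_mul (hasLineDerivAt_poissonForm e w Z)
    (hasLineDerivAt_inv_norm_pow hZ w (finrank ℝ E + 2))).congr_deriv ?_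
  rw [inv_pow_eq_sq_mul_inv_pow (norm_ne_zero_iff.mpr hZ), poissonHessian]
  push_cast
  ring

theorem sum_poissonHessian {ι : Type*} [Fintype ι] (b : OrthonormalBasis ι ℝ E) (e Z : E) :
    ∑ i, poissonHessian e (b i) Z = 0 := by
  have hcard : (Fintype.card ι : ℝ) = finrank ℝ E := by
    exact_mod_cast (finrank_eq_card_basis b.toBasis).symm
  have hinner : ∑ i, ⟪b i, e⟫ * ⟪Z, b i⟫ = ⟪Z, e⟫ := by
    simp_rw [mul_comm, b.sum_inner_mul_inner]
  have hparseval : ∑ i, ⟪Z, b i⟫ * ⟪Z, b i⟫ = ‖Z‖ ^ 2 := by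
    rw [← b.sum_sq_norm_inner_left Z]
    simp [sq]
  have hform (i : ι) : ⟪Z, b i⟫ * poissonForm e (b i) Z =
      ‖Z‖ ^ 2 * (⟪b i, e⟫ * ⟪Z, b i⟫) - finrank ℝ E * ⟪Z, e⟫ * (⟪Z, b i⟫ * ⟪Z, b i⟫) := by
    rw [poissonForm]
    ring
  simp only [poissonHessian, mul_assoc (_ + (2 : ℝ)), hform, b.norm_eq_one, one_pow, mul_one,
    Finset.sum_sub_distrib, ← Finset.mul_sum, ← Finset.sum_mul, hinner, hparseval,
    Finset.sum_const, Finset.card_univ, nsmul_eq_mul, hcard]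
  ring

theorem abs_poissonHessian_le (e w Z : E) :
    |poissonHessian e w Z| ≤
      (finrank ℝ E ^ 2 + 5 * finrank ℝ E + 4) * ‖e‖ * ‖w‖ ^ 2 * ‖Z‖ ^ 3 := by
  have hwe := abs_real_inner_le_norm w e
  have hZe := abs_real_inner_le_norm Z e
  have hZw := abs_real_inner_le_norm Z w
  have hform := abs_poissonForm_le e w Z
  have hcoeff : |(2 : ℝ) - finrank ℝ E| ≤ 2 + finrank ℝ E := by
    simpa using abs_sub (2 : ℝ) (finrank ℝ E)
  calc |poissonHessian e w Z|
      ≤ (|2 - (finrank ℝ E : ℝ)| * (|⟪w, e⟫| * |⟪Z, w⟫|) +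
            finrank ℝ E * |⟪Z, e⟫| * ‖w‖ ^ 2) * ‖Z‖ ^ 2 +
          (finrank ℝ E + 2) * |⟪Z, w⟫| * |poissonForm e w Z| := by
        refine (abs_sub _ _).trans (add_le_add ?_ (le_of_eq ?_))
        · rw [abs_mul, abs_of_nonneg (sq_nonneg ‖Z‖)]
          gcongr
          refine (abs_sub _ _).trans_eq ?_
          simp only [abs_mul, abs_pow, abs_norm, Nat.abs_cast]
        · rw [abs_mul, abs_mul, abs_of_nonneg (by positivity : (0 : ℝ) ≤ finrank ℝ E + 2)]
    _ ≤ ((2 + finrank ℝ E) * ((‖w‖ * ‖e‖) * (‖Z‖ * ‖w‖)) +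
          finrank ℝ E * (‖Z‖ * ‖e‖) * ‖w‖ ^ 2) * ‖Z‖ ^ 2 +
          (finrank ℝ E + 2) * (‖Z‖ * ‖w‖) * ((finrank ℝ E + 1) * ‖e‖ * ‖w‖ * ‖Z‖ ^ 2) := by
        gcongr
    _ = _ := by ring

end PoissonKernel

section IntegrableKernel

open scoped BoundedContinuousFunction

variable {E : Type*} [NormedAddCommGroup E] [InnerProductSpace ℝ E] {e w X : E}

theorem inner_sub_hyperplane (X : E) (y : hyperplane e) : ⟪X - y, e⟫ = ⟪X, e⟫ := by
  rw [inner_sub_left, inner_hyperplane, sub_zero]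

theorem inner_le_norm_of_norm_eq_one (he : ‖e‖ = 1) (X : E) : ⟪X, e⟫ ≤ ‖X‖ := by
  simpa [he] using real_inner_le_norm X e

theorem eventually_inner_pos (hX : 0 < ⟪X, e⟫) : ∀ᶠ X' in 𝓝 X, 0 < ⟪X', e⟫ :=
  (by fun_prop : Continuous fun X' : E => ⟪X', e⟫).continuousAt.eventually (lt_mem_nhds hX)

theorem norm_hyperplane_add_le (he : ‖e‖ = 1) (hX : 0 < ⟪X, e⟫) (y : hyperplane e) :
    ‖(y : E) + e‖ ≤ (1 + ‖X + e‖ / ⟪X, e⟫) * ‖X - y‖ := by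
  have hinner : ⟪X, e⟫ ≤ ‖X - y‖ := by
    simpa only [inner_sub_hyperplane] using inner_le_norm_of_norm_eq_one he (X - y)
  calc ‖(y : E) + e‖ = ‖(X + e) - (X - y)‖ := by congr 1; abel
    _ ≤ ‖X + e‖ + ‖X - y‖ := norm_sub_le _ _
    _ = ‖X + e‖ / ⟪X, e⟫ * ⟪X, e⟫ + ‖X - y‖ := by rw [div_mul_cancel₀ _ hX.ne']
    _ ≤ ‖X + e‖ / ⟪X, e⟫ * ‖X - y‖ + ‖X - y‖ := by gcongr
    _ = (1 + ‖X + e‖ / ⟪X, e⟫) * ‖X - y‖ := by ring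

theorem inv_norm_sub_hyperplane_pow_le (he : ‖e‖ = 1) (hX : 0 < ⟪X, e⟫) (y : hyperplane e)
    (k : ℕ) :
    (‖X - y‖ ^ k)⁻¹ ≤ (1 + ‖X + e‖ / ⟪X, e⟫) ^ k * (‖(y : E) + e‖ ^ k)⁻¹ := by
  have hy := norm_hyperplane_add_pos he y
  have hle := norm_hyperplane_add_le he hX y
  have hXy : 0 < ‖X - y‖ := pos_of_mul_pos_right (hy.trans_le hle) (by positivity)
  rw [← div_eq_mul_inv, inv_eq_one_div, div_le_div_iff₀ (by positivity) (by positivity), one_mul,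
    ← mul_pow]
  gcongr

variable [FiniteDimensional ℝ E] [MeasurableSpace E] [BorelSpace E]

/-- A kernel on the half-space `{0 < ⟪Z, e⟫}` which can be integrated against bounded functions on
its boundary, with a domination that is locally uniform in `X`. -/
structure IsIntegrableKernel (e : E) (k : E → ℝ) : Prop where
  continuousOn : ContinuousOn k {Z | 0 < ⟪Z, e⟫}
  exists_integrable_bound : ∀ X, 0 < ⟪X, e⟫ → ∃ g : hyperplane e → ℝ, Integrable g ∧
    ∀ᶠ X' in 𝓝 X, ∀ y : hyperplane e, |k (X' - y)| ≤ g y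

theorem isIntegrableKernel_of_abs_le (he : ‖e‖ = 1) {k : E → ℝ}
    (hk : ContinuousOn k {Z | 0 < ⟪Z, e⟫}) {B : ℝ → ℝ} (hB : ContinuousOn B (Set.Ioi 0))
    (hle : ∀ Z, 0 < ⟪Z, e⟫ → |k Z| ≤ B ⟪Z, e⟫ * (‖Z‖ ^ finrank ℝ E)⁻¹) :
    IsIntegrableKernel e k := by
  refine ⟨hk, fun X hX => ?_⟩
  let A (X : E) : ℝ := |B ⟪X, e⟫| * (1 + ‖X + e‖ / ⟪X, e⟫) ^ finrank ℝ E
  have hA : ContinuousAt A X := by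
    have hinner : ContinuousAt (fun X : E => ⟪X, e⟫) X := by fun_prop
    have hBX : ContinuousAt (fun X : E => B ⟪X, e⟫) X :=
      ContinuousAt.comp (hB.continuousAt (Ioi_mem_nhds hX)) hinner
    exact hBX.abs.mul ((continuousAt_const.add (.div (by fun_prop) hinner hX.ne')).pow _)
  refine ⟨fun y => (A X + 1) * (‖(y : E) + e‖ ^ finrank ℝ E)⁻¹,
    (integrable_inv_norm_hyperplane_add_pow he).const_mul _, ?_⟩
  filter_upwards [eventually_inner_pos hX, hA.eventually_le_const (lt_add_one (A X))]
    with X' hX' hAX' y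
  calc |k (X' - y)| ≤ |B ⟪X', e⟫| * (‖X' - y‖ ^ finrank ℝ E)⁻¹ := by
        refine (hle (X' - y) (by rwa [inner_sub_hyperplane])).trans ?_
        rw [inner_sub_hyperplane]
        gcongr
        exact le_abs_self _
    _ ≤ |B ⟪X', e⟫| * ((1 + ‖X' + e‖ / ⟪X', e⟫) ^ finrank ℝ E *
          (‖(y : E) + e‖ ^ finrank ℝ E)⁻¹) := by
        gcongr
        exact inv_norm_sub_hyperplane_pow_le he hX' y _
    _ = A X' * (‖(y : E) + e‖ ^ finrank ℝ E)⁻¹ := (mul_assoc _ _ _).symm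
    _ ≤ (A X + 1) * (‖(y : E) + e‖ ^ finrank ℝ E)⁻¹ := by gcongr

namespace IsIntegrableKernel

variable {k k' : E → ℝ}

theorem continuous_comp_sub (hk : IsIntegrableKernel e k) (hX : 0 < ⟪X, e⟫) :
    Continuous fun y : hyperplane e => k (X - y) :=
  hk.continuousOn.comp_continuous (by fun_prop) fun y => by
    simpa only [Set.mem_ofPred_eq, inner_sub_hyperplane]

theorem integrable_comp_sub (hk : IsIntegrableKernel e k) (hX : 0 < ⟪X, e⟫) :
    Integrable fun y : hyperplane e => k (X - y) := by
  obtain ⟨g, hg, hkg⟩ := hk.exists_integrable_bound X hX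
  exact hg.mono' (hk.continuous_comp_sub hX).aestronglyMeasurable (.of_forall hkg.self_of_nhds)

theorem integrable_comp_sub_mul (hk : IsIntegrableKernel e k) (f : hyperplane e →ᵇ ℝ)
    (hX : 0 < ⟪X, e⟫) : Integrable fun y : hyperplane e => k (X - y) * f y :=
  (hk.integrable_comp_sub hX).mul_bdd f.continuous.aestronglyMeasurable
    (.of_forall f.norm_coe_le_norm)

theorem hasLineDerivAt_integral (hk : IsIntegrableKernel e k) (hk' : IsIntegrableKernel e k')
    (hkk' : ∀ Z, 0 < ⟪Z, e⟫ → HasLineDerivAt ℝ k (k' Z) Z w) (f : hyperplane e →ᵇ ℝ)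
    (hX : 0 < ⟪X, e⟫) :
    HasLineDerivAt ℝ (fun X => ∫ y : hyperplane e, k (X - y) * f y)
      (∫ y : hyperplane e, k' (X - y) * f y) X w := by
  obtain ⟨g, hg, hkg⟩ := hk'.exists_integrable_bound X hX
  have hline : Tendsto (fun t : ℝ => X + t • w) (𝓝 0) (𝓝 X) :=
    Continuous.tendsto' (by fun_prop) _ _ (by simp)
  have hpos : ∀ᶠ t : ℝ in 𝓝 0, 0 < ⟪X + t • w, e⟫ :=
    hline.eventually (eventually_inner_pos hX)
  have hX0 : 0 < ⟪X + (0 : ℝ) • w, e⟫ := by simpa using hX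
  have hderiv := (hasDerivAt_integral_of_dominated_loc_of_deriv_le (μ := volume)
    (F := fun t (y : hyperplane e) => k (X + t • w - y) * f y)
    (F' := fun t y => k' (X + t • w - y) * f y) (bound := fun y => g y * ‖f‖)
    (hpos.and (hline.eventually hkg)) ?_ (hk.integrable_comp_sub_mul f hX0)
    (hk'.integrable_comp_sub_mul f hX0).aestronglyMeasurable ?_ (hg.mul_const _) ?_).2
  · simpa [HasLineDerivAt] using hderiv
  · exact hpos.mono fun t ht => (hk.integrable_comp_sub_mul f ht).aestronglyMeasurable
  · refine .of_forall fun y t ht => ?_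
    rw [norm_mul]
    exact mul_le_mul (ht.2 y) (f.norm_coe_le_norm y) (norm_nonneg _)
      ((abs_nonneg _).trans (ht.2 y))
  · refine .of_forall fun y t ht => HasDerivAt.mul_const ?_ _
    have hsub (s : ℝ) : X + s • w - y = (X - y) + s • w := add_sub_right_comm _ _ _
    simp only [hsub]
    refine hasDerivAt_comp_line (hkk' _ ?_)
    rw [← hsub, inner_sub_hyperplane]
    exact ht.1

end IsIntegrableKernel

theorem isIntegrableKernel_halfSpacePoissonKernel (he : ‖e‖ = 1) :
    IsIntegrableKernel e (halfSpacePoissonKernel e) := by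
  refine isIntegrableKernel_of_abs_le he (continuousOn_mul_inv_norm_pow (by fun_prop) _)
    continuousOn_id fun Z hZ => ?_
  rw [halfSpacePoissonKernel, abs_of_nonneg (by positivity), id]

theorem isIntegrableKernel_poissonForm (he : ‖e‖ = 1) (w : E) :
    IsIntegrableKernel e fun Z => poissonForm e w Z * (‖Z‖ ^ (finrank ℝ E + 2))⁻¹ := by
  refine isIntegrableKernel_of_abs_le he (continuousOn_mul_inv_norm_pow (by fun_prop) _)
    (B := fun _ => (finrank ℝ E + 1) * ‖w‖) continuousOn_const fun Z hZ => ?_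
  have hZ0 : 0 < ‖Z‖ := hZ.trans_le (inner_le_norm_of_norm_eq_one he Z)
  rw [abs_mul, abs_of_nonneg (by positivity : 0 ≤ (‖Z‖ ^ (finrank ℝ E + 2))⁻¹),
    inv_pow_eq_sq_mul_inv_pow hZ0.ne' (finrank ℝ E), ← mul_assoc]
  refine mul_le_mul_of_nonneg_right ?_ (by positivity)
  simpa [he] using abs_poissonForm_le e w Z

theorem isIntegrableKernel_poissonHessian (he : ‖e‖ = 1) (w : E) :
    IsIntegrableKernel e fun Z => poissonHessian e w Z * (‖Z‖ ^ (finrank ℝ E + 4))⁻¹ := by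
  let C : ℝ := (finrank ℝ E ^ 2 + 5 * finrank ℝ E + 4) * ‖w‖ ^ 2
  refine isIntegrableKernel_of_abs_le he (continuousOn_mul_inv_norm_pow continuous_poissonHessian _)
    (B := fun t => C / t)
    (continuousOn_const.div continuousOn_id fun t ht => ht.ne') fun Z hZ => ?_
  have hle := inner_le_norm_of_norm_eq_one he Z
  have hZ0 : 0 < ‖Z‖ := hZ.trans_le hle
  rw [abs_mul, abs_of_nonneg (by positivity : 0 ≤ (‖Z‖ ^ (finrank ℝ E + 4))⁻¹)]
  calc |poissonHessian e w Z| * (‖Z‖ ^ (finrank ℝ E + 4))⁻¹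
      ≤ C * ‖Z‖ ^ 3 * (‖Z‖ ^ (finrank ℝ E + 4))⁻¹ := by
        gcongr
        simpa [he] using abs_poissonHessian_le e w Z
    _ = C / ‖Z‖ * (‖Z‖ ^ finrank ℝ E)⁻¹ := by
        field_simp
        ring
    _ ≤ C / ⟪Z, e⟫ * (‖Z‖ ^ finrank ℝ E)⁻¹ := by gcongr

end IntegrableKernel

section PoissonExtension

open scoped BoundedContinuousFunction

theorem integral_eq_pow_finrank_mul_integral_sub_smul {V : Type*} [NormedAddCommGroup V]
    [NormedSpace ℝ V] [FiniteDimensional ℝ V] [MeasurableSpace V] [BorelSpace V] (μ : Measure V)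
    [μ.IsAddHaarMeasure] (G : V → ℝ) (p : V) {t : ℝ} (ht : 0 < t) :
    ∫ y, G y ∂μ = t ^ finrank ℝ V * ∫ z, G (p - t • z) ∂μ := by
  rw [Measure.integral_comp_smul μ (fun y => G (p - y)) t, integral_sub_left_eq_self,
    abs_of_pos (by positivity), smul_eq_mul, mul_inv_cancel_left₀ (by positivity)]

variable {E : Type*} [NormedAddCommGroup E] [InnerProductSpace ℝ E] {e X : E}

theorem norm_inv_norm_pow_mul_le (f : hyperplane e →ᵇ ℝ) (y z : hyperplane e) :
    ‖(‖(z : E) + e‖ ^ finrank ℝ E)⁻¹ * f y‖ ≤ (‖(z : E) + e‖ ^ finrank ℝ E)⁻¹ * ‖f‖ := by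
  rw [norm_mul, Real.norm_of_nonneg (by positivity)]
  gcongr
  exact f.norm_coe_le_norm y

theorem continuous_inv_norm_hyperplane_add_pow (he : ‖e‖ = 1) (k : ℕ) :
    Continuous fun z : hyperplane e => (‖(z : E) + e‖ ^ k)⁻¹ :=
  Continuous.inv₀ (by fun_prop) fun z => (pow_pos (norm_hyperplane_add_pos he z) _).ne'

theorem sub_orthogonalProjectionOnto_hyperplane_sub_smul (he : ‖e‖ = 1) (X : E)
    (z : hyperplane e) :
    X - ((hyperplane e).orthogonalProjectionOnto X - ⟪X, e⟫ • z : hyperplane e) =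
      ⟪X, e⟫ • ((z : E) + e) := by
  nth_rw 1 [← hyperplane_proj_add_smul he X]
  push_cast
  module

variable [FiniteDimensional ℝ E]

theorem halfSpacePoissonKernel_smul_hyperplane_add (he : ‖e‖ = 1) {t : ℝ} (ht : 0 < t)
    (z : hyperplane e) :
    halfSpacePoissonKernel e (t • ((z : E) + e)) =
      (t ^ finrank ℝ (hyperplane e))⁻¹ * (‖(z : E) + e‖ ^ finrank ℝ E)⁻¹ := by
  rw [halfSpacePoissonKernel, real_inner_smul_left, inner_add_left, inner_hyperplane,
    real_inner_self_eq_norm_sq, he, norm_smul, Real.norm_of_nonneg ht.le, mul_pow,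
    ← finrank_hyperplane_add_one he, pow_succ t]
  field_simp
  ring

variable [MeasurableSpace E] [BorelSpace E]

theorem integral_sub_hyperplane (he : ‖e‖ = 1) (F : E → hyperplane e → ℝ) (hX : 0 < ⟪X, e⟫) :
    ∫ y : hyperplane e, F (X - y) y = ⟪X, e⟫ ^ finrank ℝ (hyperplane e) *
      ∫ z : hyperplane e, F (⟪X, e⟫ • ((z : E) + e))
        ((hyperplane e).orthogonalProjectionOnto X - ⟪X, e⟫ • z) := by
  rw [integral_eq_pow_finrank_mul_integral_sub_smul volume _
    ((hyperplane e).orthogonalProjectionOnto X) hX]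
  simp only [sub_orthogonalProjectionOnto_hyperplane_sub_smul he]

/-- The Poisson integral over the half-space `{0 < ⟪X, e⟫}` of the boundary values `f`. It is
written in the variable `z` given by `y = proj X - ⟪X, e⟫ • z`, which also makes sense and is
continuous at the boundary. -/
def poissonExtension (e : E) (f : hyperplane e →ᵇ ℝ) (X : E) : ℝ :=
  2 / sphereArea (finrank ℝ E) * ∫ z : hyperplane e, (‖(z : E) + e‖ ^ finrank ℝ E)⁻¹ *
    f ((hyperplane e).orthogonalProjectionOnto X - ⟪X, e⟫ • z)

theorem poissonExtension_eq_integral_halfSpacePoissonKernel (he : ‖e‖ = 1)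
    (f : hyperplane e →ᵇ ℝ) (hX : 0 < ⟪X, e⟫) :
    poissonExtension e f X = 2 / sphereArea (finrank ℝ E) *
      ∫ y : hyperplane e, halfSpacePoissonKernel e (X - y) * f y := by
  rw [integral_sub_hyperplane he (fun Z y => halfSpacePoissonKernel e Z * f y) hX,
    ← integral_const_mul, poissonExtension]
  congr 2 with z
  rw [halfSpacePoissonKernel_smul_hyperplane_add he hX, mul_assoc,
    mul_inv_cancel_left₀ (by positivity)]

theorem continuous_poissonExtension (he : ‖e‖ = 1) (f : hyperplane e →ᵇ ℝ) :
    Continuous (poissonExtension e f) := by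
  refine continuous_const.mul <| continuous_of_dominated (fun X => ?_)
    (fun X => .of_forall fun z => norm_inv_norm_pow_mul_le f _ z)
    ((integrable_inv_norm_hyperplane_add_pow he).mul_const ‖f‖) (.of_forall fun z => by fun_prop)
  exact ((continuous_inv_norm_hyperplane_add_pow he _).mul (by fun_prop)).aestronglyMeasurable

theorem abs_poissonExtension_le (he : ‖e‖ = 1) (f : hyperplane e →ᵇ ℝ) (X : E) :
    |poissonExtension e f X| ≤ ‖f‖ := by
  have hω : 0 < sphereArea (finrank ℝ E) := sphereArea_pos (finrank_pos_of_norm_eq_one he)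
  have hle := norm_integral_le_of_norm_le
    ((integrable_inv_norm_hyperplane_add_pow he).mul_const ‖f‖) (.of_forall fun z =>
      norm_inv_norm_pow_mul_le f ((hyperplane e).orthogonalProjectionOnto X - ⟪X, e⟫ • z) z)
  rw [integral_mul_const, integral_inv_norm_hyperplane_add_pow he, Real.norm_eq_abs] at hle
  rw [poissonExtension, abs_mul, abs_of_pos (by positivity)]
  calc _ ≤ 2 / sphereArea (finrank ℝ E) * (sphereArea (finrank ℝ E) / 2 * ‖f‖) := by gcongr
    _ = ‖f‖ := by field_simp

theorem poissonExtension_of_inner_eq_zero (he : ‖e‖ = 1) (f : hyperplane e →ᵇ ℝ)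
    (hX : ⟪X, e⟫ = 0) :
    poissonExtension e f X = f ((hyperplane e).orthogonalProjectionOnto X) := by
  have hω : 0 < sphereArea (finrank ℝ E) := sphereArea_pos (finrank_pos_of_norm_eq_one he)
  simp only [poissonExtension, hX, zero_smul, sub_zero]
  rw [integral_mul_const, integral_inv_norm_hyperplane_add_pow he]
  field_simp

theorem hasLineDerivAt_poissonExtension (he : ‖e‖ = 1) (f : hyperplane e →ᵇ ℝ) (w : E)
    (hX : 0 < ⟪X, e⟫) :
    HasLineDerivAt ℝ (poissonExtension e f) (2 / sphereArea (finrank ℝ E) *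
      ∫ y : hyperplane e, poissonForm e w (X - y) * (‖X - y‖ ^ (finrank ℝ E + 2))⁻¹ * f y) X w := by
  have heq : poissonExtension e f =ᶠ[𝓝 X] fun X => 2 / sphereArea (finrank ℝ E) *
      ∫ y : hyperplane e, halfSpacePoissonKernel e (X - y) * f y :=
    (eventually_inner_pos hX).mono fun _ =>
      poissonExtension_eq_integral_halfSpacePoissonKernel he f
  exact heq.hasLineDerivAt_iff.2 <| HasDerivAt.const_mul _ <|
    (isIntegrableKernel_halfSpacePoissonKernel he).hasLineDerivAt_integral
      (isIntegrableKernel_poissonForm he w) (fun _ hZ =>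
        hasLineDerivAt_halfSpacePoissonKernel (ne_zero_of_inner_pos hZ) e w) f hX

theorem hasSecondLineDerivAt_poissonExtension (he : ‖e‖ = 1) (f : hyperplane e →ᵇ ℝ) (w : E)
    (hX : 0 < ⟪X, e⟫) :
    HasSecondLineDerivAt (poissonExtension e f) (2 / sphereArea (finrank ℝ E) *
      ∫ y : hyperplane e, poissonHessian e w (X - y) * (‖X - y‖ ^ (finrank ℝ E + 4))⁻¹ * f y)
      X w :=
  ⟨_, (eventually_inner_pos hX).mono fun _ => hasLineDerivAt_poissonExtension he f w,
    HasDerivAt.const_mul _ <| (isIntegrableKernel_poissonForm he w).hasLineDerivAt_integral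
      (isIntegrableKernel_poissonHessian he w) (fun _ hZ =>
        hasLineDerivAt_poissonForm_mul_inv_norm_pow (ne_zero_of_inner_pos hZ) e w) f hX⟩

theorem hasLaplacianAt_poissonExtension {ι : Type*} [Fintype ι] (b : OrthonormalBasis ι ℝ E)
    (he : ‖e‖ = 1) (f : hyperplane e →ᵇ ℝ) (hX : 0 < ⟪X, e⟫) :
    HasLaplacianAt b (poissonExtension e f) 0 X := by
  refine ⟨_, fun i => hasSecondLineDerivAt_poissonExtension he f (b i) hX, ?_⟩
  rw [← Finset.mul_sum, ← integral_finsetSum _ fun i _ =>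
    (isIntegrableKernel_poissonHessian he (b i)).integrable_comp_sub_mul f hX]
  simp only [← Finset.sum_mul, sum_poissonHessian, zero_mul, integral_zero, mul_zero]

end PoissonExtension

section HalfSpaceGradient

open scoped BoundedContinuousFunction

variable {E : Type*} [NormedAddCommGroup E] [InnerProductSpace ℝ E] [FiniteDimensional ℝ E]
  {e p w X : E} {u : E → ℝ} {M : ℝ}

theorem harmonicAt_comp_const_add (hu : HarmonicAt u (p + X)) :
    HarmonicAt (fun Y => u (p + Y)) X := by
  refine ⟨ContDiffAt.comp X hu.1 (by fun_prop), ?_⟩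
  have hlap (Y : E) : Laplacian.laplacian (fun Y => u (p + Y)) Y =
      Laplacian.laplacian u (p + Y) := by
    simp only [laplacian_eq_iteratedFDeriv_stdOrthonormalBasis, iteratedFDeriv_comp_add_left]
  have hadd : Tendsto (fun Y => p + Y) (𝓝 X) (𝓝 (p + X)) := Continuous.tendsto (by fun_prop) X
  exact (hadd.eventually hu.2).mono fun Y hY => (hlap Y).trans hY

variable [MeasurableSpace E] [BorelSpace E]

theorem eq_poissonExtension (he : ‖e‖ = 1) (f : hyperplane e →ᵇ ℝ)
    (hcont : ContinuousOn u {X | 0 ≤ ⟪X, e⟫}) (hbdd : ∀ X, 0 ≤ ⟪X, e⟫ → |u X| ≤ M)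
    (hharm : HarmonicOnNhd u {X | 0 < ⟪X, e⟫}) (hf : ∀ y : hyperplane e, u y = f y)
    (hX : 0 ≤ ⟪X, e⟫) : u X = poissonExtension e f X := by
  let b := stdOrthonormalBasis ℝ E
  have hPcont := (continuous_poissonExtension he f).continuousOn (s := {X | 0 ≤ ⟪X, e⟫})
  have hsub (Y : E) (hY : 0 ≤ ⟪Y, e⟫) : |u Y - poissonExtension e f Y| ≤ M + ‖f‖ :=
    (abs_sub _ _).trans (add_le_add (hbdd Y hY) (abs_poissonExtension_le he f Y))
  have hbdry (Y : E) (hY : ⟪Y, e⟫ = 0) : u Y = poissonExtension e f Y := by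
    rw [poissonExtension_of_inner_eq_zero he f hY, ← hf]
    nth_rw 1 [← hyperplane_proj_add_smul he Y]
    rw [hY, zero_smul, add_zero]
  have hulap (Y : E) (hY : 0 < ⟪Y, e⟫) : HasLaplacianAt b u 0 Y := .of_harmonicAt (hharm Y hY)
  have hPlap (Y : E) (hY : 0 < ⟪Y, e⟫) := hasLaplacianAt_poissonExtension b he f hY
  apply le_antisymm <;> rw [← sub_nonpos]
  · exact nonpos_on_halfSpace_of_hasLaplacianAt_zero he (hcont.sub hPcont)
      (fun Y hY => (le_abs_self _).trans (hsub Y hY)) (fun Y hY => (sub_eq_zero.2 (hbdry Y hY)).le)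
      (fun Y hY => sub_self (0 : ℝ) ▸ (hulap Y hY).sub (hPlap Y hY)) hX
  · exact nonpos_on_halfSpace_of_hasLaplacianAt_zero he (hPcont.sub hcont)
      (fun Y hY => (le_abs_self _).trans ((abs_sub_comm _ _).trans_le (hsub Y hY)))
      (fun Y hY => (sub_eq_zero.2 (hbdry Y hY).symm).le)
      (fun Y hY => sub_self (0 : ℝ) ▸ (hPlap Y hY).sub (hulap Y hY)) hX

theorem integral_abs_poissonForm_sub_le (he : ‖e‖ = 1) (hn : 2 ≤ finrank ℝ E) (hw : ‖w‖ = 1)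
    (hX : 0 < ⟪X, e⟫) :
    ∫ y : hyperplane e, |poissonForm e w (X - y) * (‖X - y‖ ^ (finrank ℝ E + 2))⁻¹| ≤
      Cconst (finrank ℝ E) * (sphereArea (finrank ℝ E) / 2) / ⟪X, e⟫ := by
  have hscale (z : hyperplane e) :
      |poissonForm e w (⟪X, e⟫ • (z + e)) * (‖⟪X, e⟫ • ((z : E) + e)‖ ^ (finrank ℝ E + 2))⁻¹| =
        (⟪X, e⟫ ^ finrank ℝ E)⁻¹ *
          (|poissonForm e w (z + e)| * (‖(z : E) + e‖ ^ (finrank ℝ E + 2))⁻¹) := by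
    simp only [poissonForm_smul_right, norm_smul, Real.norm_eq_abs, mul_pow, abs_mul, abs_inv,
      abs_pow, abs_norm, abs_of_pos hX]
    field_simp
    ring
  rw [integral_sub_hyperplane he
      (fun Z _ => |poissonForm e w Z * (‖Z‖ ^ (finrank ℝ E + 2))⁻¹|) hX]
  simp only [hscale]
  rw [integral_const_mul, ← finrank_hyperplane_add_one he, pow_succ, mul_inv, ← mul_assoc,
    mul_inv_cancel_left₀ (by positivity), div_eq_inv_mul, finrank_hyperplane_add_one he]
  gcongr
  exact integral_abs_poissonForm_le he hn hw

theorem abs_integral_poissonForm_mul_le (he : ‖e‖ = 1) (hn : 2 ≤ finrank ℝ E) (hw : ‖w‖ = 1)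
    (f : hyperplane e →ᵇ ℝ) (hX : 0 < ⟪X, e⟫) :
    |2 / sphereArea (finrank ℝ E) *
      ∫ y : hyperplane e, poissonForm e w (X - y) * (‖X - y‖ ^ (finrank ℝ E + 2))⁻¹ * f y| ≤
      Cconst (finrank ℝ E) / ⟪X, e⟫ * ‖f‖ := by
  have hω : 0 < sphereArea (finrank ℝ E) := sphereArea_pos (by lia)
  have hint := (isIntegrableKernel_poissonForm he w).integrable_comp_sub hX
  have hle := norm_integral_le_of_norm_le (hint.abs.mul_const ‖f‖) (.of_forall fun y =>
    (norm_mul _ (f y)).trans_le (mul_le_mul_of_nonneg_left (f.norm_coe_le_norm y) (abs_nonneg _)))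
  rw [integral_mul_const, Real.norm_eq_abs] at hle
  rw [abs_mul, abs_of_pos (by positivity)]
  calc _ ≤ 2 / sphereArea (finrank ℝ E) *
        (Cconst (finrank ℝ E) * (sphereArea (finrank ℝ E) / 2) / ⟪X, e⟫ * ‖f‖) := by
        gcongr
        exact hle.trans (by gcongr; exact integral_abs_poissonForm_sub_le he hn hw hX)
    _ = Cconst (finrank ℝ E) / ⟪X, e⟫ * ‖f‖ := by field_simp

theorem norm_fderiv_le_of_harmonicOnNhd_of_continuousOn_halfSpace (he : ‖e‖ = 1)
    (hn : 2 ≤ finrank ℝ E) (hcont : ContinuousOn u {X | 0 ≤ ⟪X, e⟫})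
    (hbdd : ∀ X, 0 ≤ ⟪X, e⟫ → |u X| ≤ M) (hharm : HarmonicOnNhd u {X | 0 < ⟪X, e⟫})
    (hX : 0 < ⟪X, e⟫) : ‖fderiv ℝ u X‖ ≤ Cconst (finrank ℝ E) / ⟪X, e⟫ * M := by
  have hC := Cconst_pos hn
  have hM : 0 ≤ M := (abs_nonneg _).trans (hbdd X hX.le)
  have hbdry (y : hyperplane e) : 0 ≤ ⟪(y : E), e⟫ := (inner_hyperplane y).ge
  let f : hyperplane e →ᵇ ℝ := .ofNormedAddCommGroup (fun y => u y)
    (hcont.comp_continuous (by fun_prop) hbdry) M fun y => hbdd y (hbdry y)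
  have hfM : ‖f‖ ≤ M := BoundedContinuousFunction.norm_ofNormedAddCommGroup_le _ hM _
  have heq : u =ᶠ[𝓝 X] poissonExtension e f := (eventually_inner_pos hX).mono fun Y hY =>
    eq_poissonExtension he f hcont hbdd hharm (fun _ => rfl) hY.le
  refine ContinuousLinearMap.opNorm_le_of_unit_norm (by positivity) fun w hw => ?_
  have hu := ((hharm X hX).1.differentiableAt two_ne_zero).hasFDerivAt.hasLineDerivAt w
  rw [hu.unique (heq.hasLineDerivAt_iff.2 (hasLineDerivAt_poissonExtension he f w hX)),
    Real.norm_eq_abs]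
  exact (abs_integral_poissonForm_mul_le he hn hw f hX).trans (by gcongr)

theorem norm_fderiv_le_of_harmonicOnNhd_halfSpace (he : ‖e‖ = 1) (hn : 2 ≤ finrank ℝ E)
    (hharm : HarmonicOnNhd u {X | 0 < ⟪X - p, e⟫}) (hbdd : ∀ X, 0 < ⟪X - p, e⟫ → |u X| ≤ M)
    (hX : 0 < ⟪X - p, e⟫) : ‖fderiv ℝ u X‖ ≤ Cconst (finrank ℝ E) / ⟪X - p, e⟫ * M := by
  have hinside (d : ℝ) (hd : 0 < d) (hdX : d < ⟪X - p, e⟫) :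
      ‖fderiv ℝ u X‖ ≤ Cconst (finrank ℝ E) / d * M := by
    let q := p + (⟪X - p, e⟫ - d) • e
    have hq (Y : E) : ⟪q + Y - p, e⟫ = ⟪Y, e⟫ + (⟪X - p, e⟫ - d) := by
      rw [show q + Y - p = Y + (⟪X - p, e⟫ - d) • e by unfold q; abel, inner_add_left,
        real_inner_smul_left, real_inner_self_eq_norm_sq, he, one_pow, mul_one]
    have hXq : ⟪X - q, e⟫ = d := by
      have := hq (X - q)
      rw [add_sub_cancel] at this
      linarith
    have hpos (Y : E) (hY : 0 ≤ ⟪Y, e⟫) : 0 < ⟪q + Y - p, e⟫ := by rw [hq]; linarith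
    have hharm' (Y : E) (hY : 0 ≤ ⟪Y, e⟫) : HarmonicAt (fun Y => u (q + Y)) Y :=
      harmonicAt_comp_const_add (hharm _ (hpos Y hY))
    have hle := norm_fderiv_le_of_harmonicOnNhd_of_continuousOn_halfSpace he hn
      (fun Y hY => (hharm' Y hY).1.continuousAt.continuousWithinAt)
      (fun Y hY => hbdd _ (hpos Y hY)) (fun Y hY => hharm' Y (le_of_lt hY)) (hXq ▸ hd)
    rwa [fderiv_comp_add_left, add_sub_cancel, hXq] at hle
  have hlim : Tendsto (fun d => Cconst (finrank ℝ E) / d * M) (𝓝[<] ⟪X - p, e⟫)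
      (𝓝 (Cconst (finrank ℝ E) / ⟪X - p, e⟫ * M)) :=
    ((continuousAt_const.div continuousAt_id hX.ne').mul continuousAt_const).mono_left
      nhdsWithin_le_nhds
  refine ge_of_tendsto hlim ?_
  filter_upwards [Ioo_mem_nhdsLT hX] with d hd
  exact hinside d hd.1 hd.2

end HalfSpaceGradient

section ComplementConvex

variable {E : Type*} [NormedAddCommGroup E] [InnerProductSpace ℝ E] {K : Set E} {x p e : E}

theorem exists_mem_unit_normal_of_notMem (hK : Convex ℝ K) (hcomplete : IsComplete K)
    (hne : K.Nonempty) (hx : x ∉ K) :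
    ∃ p ∈ K, ∃ e : E, ‖e‖ = 1 ∧ ⟪x - p, e⟫ = ‖x - p‖ ∧ ∀ y ∈ K, ⟪y - p, e⟫ ≤ 0 := by
  obtain ⟨p, hp, hmin⟩ := exists_norm_eq_iInf_of_complete_convex hne hcomplete hK x
  have hobtuse := (norm_eq_iInf_iff_real_inner_le_zero hK hp).1 hmin
  have hxp : 0 < ‖x - p‖ := norm_sub_pos_iff.2 fun h => hx (h ▸ hp)
  refine ⟨p, hp, ‖x - p‖⁻¹ • (x - p), ?_, ?_, fun y hy => ?_⟩
  · rw [norm_smul, norm_inv, norm_norm, inv_mul_cancel₀ hxp.ne']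
  · rw [real_inner_smul_right, real_inner_self_eq_norm_sq, sq, inv_mul_cancel_left₀ hxp.ne']
  · rw [real_inner_smul_right, real_inner_comm]
    exact mul_nonpos_of_nonneg_of_nonpos (by positivity) (hobtuse y hy)

theorem mem_frontier_of_forall_inner_nonpos (hp : p ∈ K) (he : e ≠ 0)
    (hle : ∀ y ∈ K, ⟪y - p, e⟫ ≤ 0) : p ∈ frontier K := by
  refine ⟨subset_closure hp, fun hint => ?_⟩
  have hline : Tendsto (fun t : ℝ => p + t • e) (𝓝[>] 0) (𝓝 p) :=
    (Continuous.tendsto' (by fun_prop) _ _ (by simp)).mono_left nhdsWithin_le_nhds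
  obtain ⟨t, htK, ht⟩ :=
    ((hline.eventually (mem_interior_iff_mem_nhds.1 hint)).and self_mem_nhdsWithin).exists
  have hnonpos := hle _ htK
  rw [add_sub_cancel_left, real_inner_smul_left] at hnonpos
  exact hnonpos.not_gt (mul_pos ht (real_inner_self_pos.2 he))

theorem gradient_bound_complement_convex_general [FiniteDimensional ℝ E]
    (hn : 2 ≤ finrank ℝ E) {G : Set E} (hG : Convex ℝ G) (hGne : G.Nonempty) {u : E → ℝ}
    (hu : HarmonicOnNhd u (closure G)ᶜ) {M : ℝ} (hM : ∀ y ∈ (closure G)ᶜ, |u y| ≤ M)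
    (hx : x ∈ (closure G)ᶜ) :
    ‖fderiv ℝ u x‖ ≤ Cconst (finrank ℝ E) / infDist x (frontier (closure G)ᶜ) * M := by
  borelize E
  obtain ⟨p, hp, e, he, hxp, hle⟩ := exists_mem_unit_normal_of_notMem hG.closure
    isClosed_closure.isComplete hGne.closure hx
  have hhalf (X : E) (hX : 0 < ⟪X - p, e⟫) : X ∈ (closure G)ᶜ := fun hXG => (hle X hXG).not_gt hX
  have hxp_pos : 0 < ‖x - p‖ := norm_sub_pos_iff.2 fun h => hx (h ▸ hp)
  have hpfront : p ∈ frontier (closure G)ᶜ := frontier_compl (closure G) ▸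
    mem_frontier_of_forall_inner_nonpos hp (norm_ne_zero_iff.1 (he ▸ one_ne_zero)) hle
  have hxfront : x ∉ frontier (closure G)ᶜ := by
    rw [isClosed_closure.isOpen_compl.frontier_eq]
    exact fun hxG => hxG.2 hx
  have hdist_pos := (isClosed_frontier.notMem_iff_infDist_pos ⟨p, hpfront⟩).1 hxfront
  have hM0 : 0 ≤ M := (abs_nonneg _).trans (hM x hx)
  have hC := Cconst_pos hn
  calc ‖fderiv ℝ u x‖ ≤ Cconst (finrank ℝ E) / ‖x - p‖ * M := hxp ▸
        norm_fderiv_le_of_harmonicOnNhd_halfSpace he hn (fun X hX => hu X (hhalf X hX))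
          (fun X hX => hM X (hhalf X hX)) (hxp ▸ hxp_pos)
    _ ≤ Cconst (finrank ℝ E) / infDist x (frontier (closure G)ᶜ) * M := by
        gcongr
        exact (infDist_le_dist_of_mem hpfront).trans_eq (dist_eq_norm x p)

end ComplementConvex

theorem norm_gradient_eq_norm_fderiv {E : Type*} [NormedAddCommGroup E] [InnerProductSpace ℝ E]
    [CompleteSpace E] (u : E → ℝ) (x : E) : ‖gradient u x‖ = ‖fderiv ℝ u x‖ :=
  LinearIsometryEquiv.norm_map _ _

theorem IsHarmonicOn.harmonicOnNhd {n : ℕ} {u : Eu n → ℝ} {Ω : Set (Eu n)}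
    (hu : IsHarmonicOn u Ω) (hΩ : IsOpen Ω) : HarmonicOnNhd u Ω := by
  intro x hx
  refine ⟨hu.1.contDiffAt (hΩ.mem_nhds hx), ?_⟩
  filter_upwards [hΩ.mem_nhds hx] with y hy
  rw [laplacian_eq_iteratedFDeriv_orthonormalBasis u (EuclideanSpace.basisFun (Fin n) ℝ),
    Pi.zero_apply, ← hu.2 y hy]
  refine Finset.sum_congr rfl fun i _ => ?_
  have hdiff : DifferentiableAt ℝ (fderiv ℝ u) y :=
    ((hu.1.contDiffAt (hΩ.mem_nhds hy)).fderiv_right (m := 1) le_rfl).differentiableAt one_ne_zero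
  simp [iteratedFDeriv_two_apply, fderiv_clm_apply hdiff]

/-- Let `n ≥ 2` and `Ω = ℝⁿ \ Ḡ` with `G` a convex domain in `ℝⁿ`.
If `u` is a bounded harmonic function in `Ω` (say `|u| ≤ M` on `Ω`), then for every
`x ∈ Ω`, `|∇u(x)| ≤ (C_n / d_x) · sup_Ω |u| ≤ (C_n / d_x) · M`, where
`C_n = 4 (n-1)^{(n-1)/2} ω_{n-1} / (n^{n/2} ω_n)` and `d_x = dist(x, ∂Ω)`. -/
theorem gradient_bound_complement_convex
    (n : ℕ) (hn : 2 ≤ n) (G Ω : Set (Eu n))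
    (hGo : IsOpen G) (hGc : Convex ℝ G) (hGne : G.Nonempty)
    (hΩ : Ω = (closure G)ᶜ)
    (u : Eu n → ℝ) (hu : IsHarmonicOn u Ω)
    (M : ℝ) (hM : ∀ y ∈ Ω, |u y| ≤ M)
    (x : Eu n) (hx : x ∈ Ω) :
    ‖gradient u x‖ ≤ Cconst n / Metric.infDist x (frontier Ω) * M := by
  subst hΩ
  simpa [norm_gradient_eq_norm_fderiv] using gradient_bound_complement_convex_general
    (by simpa using hn) hGc hGne (hu.harmonicOnNhd isClosed_closure.isOpen_compl) hM hx
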